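/- For a natural unit interval graph G = ([n],E), with s(G) = [b_2]_q···[b_n]_q (b_i the number of neighbours of i smaller than i) and s_k(G) = Σ q^{inv_G(list(T_1)·list(T_2))}, summed over pairs of decreasing trees T_1, T_2 with V(T_1) ⊔ V(T_2) = [n], 1 ∈ V(T_1), |V(T_2)| = k, the coefficient of e_{(n-k,k)} in X_G(x;q) for 1 ≤ k < n/2 equals [n-k]_q([k]_q s_k(G) - s(G)) + [k]_q([n-k]_q s_{n-k}(G) - s(G)). -/

import Mathlib

noncomputable def qint (m : ℕ) : Polynomial ℤ := ∑ i ∈ Finset.range m, Polynomial.X ^ i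

/-- `G` is a natural unit interval graph. -/
def IsNUIG {n : ℕ} (G : SimpleGraph (Fin n)) : Prop :=
  ∀ i j k : Fin n, i < j → j < k → G.Adj i k → G.Adj i j ∧ G.Adj j k

/-- The number of ascents of a colouring. -/
noncomputable def ascNum {n : ℕ} (G : SimpleGraph (Fin n)) {N : ℕ} (κ : Fin n → Fin N) : ℕ :=
  Nat.card {p : Fin n × Fin n // p.1 < p.2 ∧ G.Adj p.1 p.2 ∧ κ p.1 < κ p.2}

/-- The chromatic quasisymmetric function `X_G(x;q)` in the variables `x_1, …, x_N`. -/
noncomputable def cqf {n : ℕ} (G : SimpleGraph (Fin n)) (N : ℕ) :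
    MvPolynomial (Fin N) (Polynomial ℤ) :=
  ∑ᶠ (κ : Fin n → Fin N) (_ : ∀ i j, G.Adj i j → κ i ≠ κ j),
    MvPolynomial.C (Polynomial.X ^ ascNum G κ) * ∏ i, MvPolynomial.X (κ i)

/-- A subgraph `T` of `G` is a decreasing subtree. -/
def IsDecreasingTree {n : ℕ} (G : SimpleGraph (Fin n)) (T : G.Subgraph) : Prop :=
  T.verts.Nonempty ∧ T.coe.IsTree ∧
    ∀ v ∈ T.verts, (∃ u ∈ T.verts, v < u) → ∃! w : Fin n, v < w ∧ T.Adj v w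

/-- `l` is the reading order `list(T)` of the subtree `T`. -/
def IsReadList {n : ℕ} {G : SimpleGraph (Fin n)} (T : G.Subgraph) (l : List (Fin n)) :
    Prop :=
  l.Nodup ∧ (∀ v : Fin n, v ∈ l ↔ v ∈ T.verts) ∧
    (∀ h0 : 0 < l.length, ∀ v ∈ T.verts, l.get ⟨0, h0⟩ ≤ v) ∧
    ∀ t : ℕ, ∀ ht : t < l.length, 0 < t →
      IsLeast {v : Fin n | v ∈ T.verts ∧ v ∉ l.take t ∧ ∃ u ∈ l.take t, T.Adj u v}
        (l.get ⟨t, ht⟩)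

/-- `l` is the reading list of some decreasing subtree of `G`. -/
def IsDecTreeList {n : ℕ} (G : SimpleGraph (Fin n)) (l : List (Fin n)) : Prop :=
  ∃ T : G.Subgraph, IsDecreasingTree G T ∧ IsReadList T l

/-- `inv_G(σ)`. -/
noncomputable def invG {n : ℕ} (G : SimpleGraph (Fin n)) (l : List (Fin n)) : ℕ :=
  Nat.card {p : Fin l.length × Fin l.length //
    p.1 < p.2 ∧ l.get p.2 < l.get p.1 ∧ G.Adj (l.get p.2) (l.get p.1)}

/-- `b_i`: the number of neighbours of `i` smaller than `i`. -/
noncomputable def bG {n : ℕ} (G : SimpleGraph (Fin n)) (i : Fin n) : ℕ :=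
  Nat.card {j : Fin n // j < i ∧ G.Adj j i}

/-- `s(G) = [b_2]_q ⋯ [b_n]_q`. -/
noncomputable def sG {n : ℕ} (G : SimpleGraph (Fin n)) : Polynomial ℤ :=
  ∏ i ∈ Finset.univ.filter (fun i : Fin n => (i : ℕ) ≠ 0), qint (bG G i)

/-- `s_k(G) = Σ q^{inv_G(list(T₁)·list(T₂))}` over pairs of decreasing trees `T₁, T₂`
with `V(T₁) ⊔ V(T₂) = [n]`, `1 ∈ V(T₁)` and `|V(T₂)| = k`; a pair is encoded by the
concatenated list `l = list(T₁) ++ list(T₂)`, split at position `n - k`. -/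
noncomputable def skG {n : ℕ} (G : SimpleGraph (Fin n)) (hn : 0 < n) (k : ℕ) :
    Polynomial ℤ :=
  ∑ᶠ (l : List (Fin n)) (_ : l.Nodup ∧ l.toFinset = Finset.univ ∧
      IsDecTreeList G (l.take (n - k)) ∧ IsDecTreeList G (l.drop (n - k)) ∧
      (⟨0, hn⟩ : Fin n) ∈ l.take (n - k)),
    (Polynomial.X : Polynomial ℤ) ^ invG G l

section SetAlgebra

open Finset Polynomial
open scoped Classical

variable {n : ℕ} {G : SimpleGraph (Fin n)}

/-- The number of edges `{a, b}` with `a ∈ A`, `b ∈ B` and `a < b`. -/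
noncomputable def ascBetween (G : SimpleGraph (Fin n)) (A B : Finset (Fin n)) : ℕ :=
  ∑ a ∈ A, ∑ b ∈ B, if a < b ∧ G.Adj a b then 1 else 0

lemma ascBetween_union_left {A B C : Finset (Fin n)} (h : Disjoint A B) :
    ascBetween G (A ∪ B) C = ascBetween G A C + ascBetween G B C :=
  sum_union h

lemma ascBetween_union_right {A B C : Finset (Fin n)} (h : Disjoint B C) :
    ascBetween G A (B ∪ C) = ascBetween G A B + ascBetween G A C := by
  simp [ascBetween, sum_union h, sum_add_distrib]

@[simp] lemma ascBetween_empty_left (A : Finset (Fin n)) : ascBetween G ∅ A = 0 := by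
  simp [ascBetween]

@[simp] lemma ascBetween_empty_right (A : Finset (Fin n)) : ascBetween G A ∅ = 0 := by
  simp [ascBetween]

/-- Functions on the subsets of `[n]`, with the product
`(f * g)(S) = ∑_{S = A ⊔ B} q ^ asc(A, B) f(A) g(B)`. -/
def SetAlg (_G : SimpleGraph (Fin n)) : Type := Finset (Fin n) → ℤ[X]

namespace SetAlg

noncomputable instance : AddCommGroup (SetAlg G) :=
  inferInstanceAs (AddCommGroup (Finset (Fin n) → ℤ[X]))

noncomputable instance : Module ℤ[X] (SetAlg G) :=
  inferInstanceAs (Module ℤ[X] (Finset (Fin n) → ℤ[X]))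

@[ext] lemma ext {f g : SetAlg G} (h : ∀ S, f S = g S) : f = g := funext h

@[simp] lemma add_apply (f g : SetAlg G) (S : Finset (Fin n)) : (f + g) S = f S + g S := rfl
@[simp] lemma sub_apply (f g : SetAlg G) (S : Finset (Fin n)) : (f - g) S = f S - g S := rfl
@[simp] lemma neg_apply (f : SetAlg G) (S : Finset (Fin n)) : (-f) S = -f S := rfl
@[simp] lemma zero_apply (S : Finset (Fin n)) : (0 : SetAlg G) S = 0 := rfl
@[simp] lemma smul_apply (r : ℤ[X]) (f : SetAlg G) (S : Finset (Fin n)) :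
    (r • f) S = r * f S := rfl

lemma sum_apply {ι : Type*} (s : Finset ι) (f : ι → SetAlg G) (S : Finset (Fin n)) :
    (∑ i ∈ s, f i) S = ∑ i ∈ s, f i S :=
  Finset.sum_apply (M := fun _ : Finset (Fin n) => ℤ[X]) S s f

noncomputable instance : Mul (SetAlg G) :=
  ⟨fun f g S => ∑ A ∈ S.powerset, X ^ ascBetween G A (S \ A) * f A * g (S \ A)⟩

noncomputable instance : One (SetAlg G) := ⟨fun S => if S = ∅ then 1 else 0⟩

lemma mul_apply (f g : SetAlg G) (S : Finset (Fin n)) :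
    (f * g) S = ∑ A ∈ S.powerset, X ^ ascBetween G A (S \ A) * f A * g (S \ A) := rfl

lemma one_apply (S : Finset (Fin n)) : (1 : SetAlg G) S = if S = ∅ then 1 else 0 := rfl

lemma mul_assoc_apply (f g h : SetAlg G) (S : Finset (Fin n)) :
    (f * g * h) S = (f * (g * h)) S := by
  simp only [mul_apply, mul_sum, sum_mul]
  rw [sum_sigma', sum_sigma']
  refine sum_bij' (fun p _ => ⟨p.2, p.1 \ p.2⟩) (fun p _ => ⟨p.1 ∪ p.2, p.1⟩) ?_ ?_ ?_ ?_ ?_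
  · rintro ⟨T, A⟩ hp
    simp only [mem_sigma, mem_powerset] at hp ⊢
    exact ⟨hp.2.trans hp.1, sdiff_subset_sdiff hp.1 le_rfl⟩
  · rintro ⟨A, B⟩ hp
    simp only [mem_sigma, mem_powerset] at hp ⊢
    exact ⟨union_subset hp.1 (hp.2.trans sdiff_subset), subset_union_left⟩
  · rintro ⟨T, A⟩ hp
    simp only [mem_sigma, mem_powerset] at hp
    simp [union_sdiff_of_subset hp.2]
  · rintro ⟨A, B⟩ hp
    simp only [mem_sigma, mem_powerset] at hp
    have : Disjoint B A := disjoint_of_subset_left hp.2 sdiff_disjoint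
    simp [union_sdiff_left, sdiff_eq_self_of_disjoint this]
  · rintro ⟨T, A⟩ hp
    simp only [mem_sigma, mem_powerset] at hp
    obtain ⟨hT, hA⟩ := hp
    have e1 : (S \ A) \ (T \ A) = S \ T := by
      ext v; simp only [mem_sdiff]; have := @hA v; tauto
    have e2 : ascBetween G T (S \ T) = ascBetween G A (S \ T) + ascBetween G (T \ A) (S \ T) := by
      rw [← ascBetween_union_left disjoint_sdiff, union_sdiff_of_subset hA]
    have e3 : ascBetween G A (S \ A) = ascBetween G A (T \ A) + ascBetween G A (S \ T) := by
      rw [← ascBetween_union_right]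
      · congr 1
        ext v; simp only [mem_sdiff, mem_union]; have := @hA v; have := @hT v; tauto
      · exact disjoint_of_subset_left sdiff_subset disjoint_sdiff
    dsimp only
    rw [e1, e2, e3]
    ring

noncomputable instance : Ring (SetAlg G) where
  left_distrib f g h := by
    ext1 S; simp only [mul_apply, add_apply, mul_add, sum_add_distrib]
  right_distrib f g h := by
    ext1 S; simp only [mul_apply, add_apply, mul_add, add_mul, sum_add_distrib]
  zero_mul f := by ext1 S; simp [mul_apply]
  mul_zero f := by ext1 S; simp [mul_apply]
  mul_assoc f g h := by ext1 S; exact mul_assoc_apply f g h S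
  one_mul f := by
    ext1 S
    rw [mul_apply, sum_eq_single ∅] <;> simp +contextual [one_apply]
  mul_one f := by
    ext1 S
    rw [mul_apply, sum_eq_single S]
    · simp [one_apply]
    · intro A hA hne
      have : S \ A ≠ ∅ := fun h =>
        hne (Subset.antisymm (mem_powerset.1 hA) (sdiff_eq_empty_iff_subset.1 h))
      simp [one_apply, this]
    · simp
  neg_add_cancel := neg_add_cancel
  zsmul := fun z f => z • f
  zsmul_zero' := SubNegMonoid.zsmul_zero'
  zsmul_succ' := SubNegMonoid.zsmul_succ'
  zsmul_neg' := SubNegMonoid.zsmul_neg'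

noncomputable instance : Algebra ℤ[X] (SetAlg G) :=
  Algebra.ofModule
    (fun r f g => by
      ext1 S; simp only [mul_apply, smul_apply, mul_sum]
      exact sum_congr rfl fun _ _ => by ring)
    (fun r f g => by
      ext1 S; simp only [mul_apply, smul_apply, mul_sum]
      exact sum_congr rfl fun _ _ => by ring)

/-- The part of `f` supported on the sets of size `m`. -/
noncomputable def grade (f : Finset (Fin n) → ℤ[X]) (m : ℕ) : SetAlg G :=
  fun S => if #S = m then f S else 0

lemma grade_apply (f : Finset (Fin n) → ℤ[X]) (m : ℕ) (S : Finset (Fin n)) :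
    (grade f m : SetAlg G) S = if #S = m then f S else 0 := rfl

end SetAlg

end SetAlgebra

section TwoColourings

open Finset Polynomial
open scoped Classical

variable {n : ℕ} {G : SimpleGraph (Fin n)}

/-- The number of neighbours of `v` in `A`. -/
noncomputable def degIn (G : SimpleGraph (Fin n)) (v : Fin n) (A : Finset (Fin n)) : ℕ :=
  ∑ a ∈ A, if G.Adj a v then 1 else 0

/-- `A` is a stable set. -/
def IsStable (G : SimpleGraph (Fin n)) (A : Finset (Fin n)) : Prop :=
  ∀ a ∈ A, ∀ b ∈ A, ¬ G.Adj a b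

@[simp] lemma degIn_empty (v : Fin n) : degIn G v ∅ = 0 := by simp [degIn]

lemma degIn_insert {v w : Fin n} {A : Finset (Fin n)} (h : w ∉ A) :
    degIn G v (insert w A) = (if G.Adj w v then 1 else 0) + degIn G v A :=
  sum_insert h

lemma degIn_union {v : Fin n} {A B : Finset (Fin n)} (h : Disjoint A B) :
    degIn G v (A ∪ B) = degIn G v A + degIn G v B :=
  sum_union h

lemma degIn_eq_card (v : Fin n) (A : Finset (Fin n)) :
    degIn G v A = #{a ∈ A | G.Adj a v} := by
  simp [degIn]

lemma degIn_eq_zero {v : Fin n} {A : Finset (Fin n)} :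
    degIn G v A = 0 ↔ ∀ a ∈ A, ¬ G.Adj a v := by
  simp [degIn]

lemma ascBetween_insert_right_of_lt {v : Fin n} {A B : Finset (Fin n)}
    (hA : ∀ a ∈ A, a < v) (hB : v ∉ B) :
    ascBetween G A (insert v B) = ascBetween G A B + degIn G v A := by
  simp only [ascBetween, degIn, ← sum_add_distrib]
  refine sum_congr rfl fun a ha => ?_
  rw [sum_insert hB, add_comm]
  simp [hA a ha]

lemma ascBetween_insert_left_of_lt {v : Fin n} {A B : Finset (Fin n)}
    (hA : v ∉ A) (hB : ∀ b ∈ B, b < v) :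
    ascBetween G (insert v A) B = ascBetween G A B := by
  rw [ascBetween, sum_insert hA, ← ascBetween, add_eq_right]
  exact sum_eq_zero fun b hb => by simp [(hB b hb).not_gt]

lemma ascBetween_insert_left_of_gt {v : Fin n} {A B : Finset (Fin n)}
    (hA : v ∉ A) (hB : ∀ b ∈ B, v < b) :
    ascBetween G (insert v A) B = ascBetween G A B + degIn G v B := by
  rw [ascBetween, sum_insert hA, ← ascBetween, add_comm]
  congr 1
  exact sum_congr rfl fun b hb => by simp [hB b hb, G.adj_comm]

lemma ascBetween_insert_right_of_gt {v : Fin n} {A B : Finset (Fin n)}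
    (hA : ∀ a ∈ A, v < a) (hB : v ∉ B) :
    ascBetween G A (insert v B) = ascBetween G A B := by
  refine sum_congr rfl fun a ha => ?_
  rw [sum_insert hB]
  simp [(hA a ha).not_gt]

lemma isStable_empty : IsStable G ∅ := by simp [IsStable]

lemma isStable_insert {v : Fin n} {A : Finset (Fin n)} :
    IsStable G (insert v A) ↔ IsStable G A ∧ degIn G v A = 0 := by
  rw [degIn_eq_zero]
  constructor
  · intro h
    exact ⟨fun a ha b hb => h a (mem_insert_of_mem ha) b (mem_insert_of_mem hb),
      fun a ha => h a (mem_insert_of_mem ha) v (mem_insert_self _ _)⟩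
  · rintro ⟨h1, h2⟩ a ha b hb
    rcases mem_insert.1 ha with rfl | ha' <;> rcases mem_insert.1 hb with rfl | hb'
    · exact G.loopless.irrefl _
    · exact fun h => h2 b hb' h.symm
    · exact h2 a ha'
    · exact h1 a ha' b hb'

/-- The neighbours of `v` in `S` form a clique. -/
def NbrClique (G : SimpleGraph (Fin n)) (v : Fin n) (S : Finset (Fin n)) : Prop :=
  ∀ a ∈ S, ∀ b ∈ S, a ≠ b → G.Adj a v → G.Adj b v → G.Adj a b

lemma NbrClique.subset {v : Fin n} {S T : Finset (Fin n)} (h : NbrClique G v S) (hT : T ⊆ S) :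
    NbrClique G v T :=
  fun a ha b hb => h a (hT ha) b (hT hb)

lemma IsNUIG.nbrClique_of_lt (hG : IsNUIG G) {v : Fin n} {S : Finset (Fin n)}
    (hS : ∀ a ∈ S, a < v) : NbrClique G v S := by
  intro a ha b hb hab h1 h2
  rcases lt_or_gt_of_ne hab with h | h
  · exact (hG a b v h (hS b hb) h1).1
  · exact (hG b a v h (hS a ha) h2).1.symm

lemma IsNUIG.nbrClique_of_gt (hG : IsNUIG G) {v : Fin n} {S : Finset (Fin n)}
    (hS : ∀ a ∈ S, v < a) : NbrClique G v S := by
  intro a ha b hb hab h1 h2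
  rcases lt_or_gt_of_ne hab with h | h
  · exact (hG v a b (hS a ha) h h2.symm).2
  · exact (hG v b a (hS b hb) h h1.symm).2.symm

lemma NbrClique.not_isStable {v : Fin n} {S : Finset (Fin n)} (h : NbrClique G v S)
    (hd : 2 ≤ degIn G v S) : ¬ IsStable G S := by
  rw [degIn_eq_card] at hd
  obtain ⟨a, ha, b, hb, hab⟩ := one_lt_card.1 hd
  simp only [mem_filter] at ha hb
  exact fun hs => hs a ha.1 b hb.1 (h a ha.1 b hb.1 hab ha.2 hb.2)

lemma sum_splits_insert {M : Type*} [AddCommMonoid M] {v : Fin n} {S : Finset (Fin n)}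
    (hv : v ∉ S) (F : Finset (Fin n) → Finset (Fin n) → M) :
    ∑ A ∈ (insert v S).powerset, F A (insert v S \ A) =
      ∑ A ∈ S.powerset, (F (insert v A) (S \ A) + F A (insert v (S \ A))) := by
  rw [sum_powerset_insert hv, add_comm, ← sum_add_distrib]
  refine sum_congr rfl fun A hA => ?_
  have hA' := mem_powerset.1 hA
  rw [insert_sdiff_of_notMem _ (fun h => hv (hA' h)), insert_sdiff_insert,
    sdiff_insert_of_notMem hv]

lemma sum_splits_congr {M : Type*} [AddCommMonoid M] {S : Finset (Fin n)}
    {F H : Finset (Fin n) → Finset (Fin n) → M}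
    (h : ∀ A B, A ∪ B = S → Disjoint A B → F A B = H A B) :
    ∑ A ∈ S.powerset, F A (S \ A) = ∑ A ∈ S.powerset, H A (S \ A) :=
  sum_congr rfl fun _ hA =>
    h _ _ (union_sdiff_of_subset (mem_powerset.1 hA)) disjoint_sdiff

/-- The generating function of the proper colourings of `S` with two colours, with `q` marking
ascents and `u`, `v` marking the sizes of the colour classes. -/
noncomputable def twoCol {K : Type*} [CommRing K] (G : SimpleGraph (Fin n)) (q u v : K)
    (S : Finset (Fin n)) : K :=
  ∑ A ∈ S.powerset, if IsStable G A ∧ IsStable G (S \ A) then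
    q ^ ascBetween G A (S \ A) * u ^ #A * v ^ #(S \ A) else 0

variable {K : Type*} [CommRing K]

lemma twoCol_insert (q u v : K) {w : Fin n} {S : Finset (Fin n)}
    (hw : ∀ a ∈ S, a < w) :
    twoCol G q u v (insert w S) = ∑ A ∈ S.powerset,
      if IsStable G A ∧ IsStable G (S \ A) then
        q ^ ascBetween G A (S \ A) * u ^ #A * v ^ #(S \ A) *
          ((if degIn G w A = 0 then u else 0) +
            if degIn G w (S \ A) = 0 then q ^ degIn G w A * v else 0) else 0 := by
  have hwS : w ∉ S := fun h => (hw w h).false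
  rw [twoCol, sum_splits_insert hwS (fun A B => if IsStable G A ∧ IsStable G B then
    q ^ ascBetween G A B * u ^ #A * v ^ #B else 0)]
  refine sum_splits_congr (F := fun A B => (if IsStable G (insert w A) ∧ IsStable G B then
    q ^ ascBetween G (insert w A) B * u ^ #(insert w A) * v ^ #B else 0) +
    (if IsStable G A ∧ IsStable G (insert w B) then
    q ^ ascBetween G A (insert w B) * u ^ #A * v ^ #(insert w B) else 0))
    (H := fun A B => if IsStable G A ∧ IsStable G B then
        q ^ ascBetween G A B * u ^ #A * v ^ #B *
          ((if degIn G w A = 0 then u else 0) +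
            if degIn G w B = 0 then q ^ degIn G w A * v else 0) else 0) ?_
  rintro A B rfl -
  have hA : w ∉ A := fun h => hwS (mem_union_left _ h)
  have hB : w ∉ B := fun h => hwS (mem_union_right _ h)
  rw [ascBetween_insert_left_of_lt hA fun b hb => hw b (mem_union_right _ hb),
    ascBetween_insert_right_of_lt (fun a ha => hw a (mem_union_left _ ha)) hB,
    card_insert_of_notMem hA, card_insert_of_notMem hB, isStable_insert, isStable_insert]
  by_cases h1 : IsStable G A <;> by_cases h2 : IsStable G B <;> simp only [h1, h2, true_and,
    and_true, false_and, and_false, if_true, if_false, add_zero]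
  split_ifs <;> ring

lemma twoCol_insert_of_degIn_eq_zero (q u v : K) {w : Fin n} {S : Finset (Fin n)}
    (hw : ∀ a ∈ S, a < w) (hd : degIn G w S = 0) :
    twoCol G q u v (insert w S) = (u + v) * twoCol G q u v S := by
  rw [twoCol_insert q u v hw, twoCol, mul_sum]
  refine sum_congr rfl fun A hA => ?_
  rw [degIn_eq_zero] at hd
  have h1 : degIn G w A = 0 := degIn_eq_zero.2 fun a ha => hd a (mem_powerset.1 hA ha)
  have h2 : degIn G w (S \ A) = 0 := degIn_eq_zero.2 fun a ha => hd a (sdiff_subset ha)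
  rw [h1, h2]
  split_ifs <;> simp_all; try ring

lemma IsNUIG.split_cases (hG : IsNUIG G) {w : Fin n} {S A B : Finset (Fin n)}
    (hw : ∀ a ∈ S, a < w) (hAB : A ∪ B = S) (hdis : Disjoint A B) (hd : 2 ≤ degIn G w S)
    (hA : IsStable G A) (hB : IsStable G B) : degIn G w A ≠ 0 ∧ degIn G w B ≠ 0 := by
  subst hAB
  have hc := hG.nbrClique_of_lt hw
  rw [degIn_union hdis] at hd
  constructor <;> intro h
  · exact (hc.subset subset_union_right).not_isStable (by omega) hB
  · exact (hc.subset subset_union_left).not_isStable (by omega) hA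

lemma IsNUIG.twoCol_insert_of_two_le (hG : IsNUIG G) (q u v : K) {w : Fin n}
    {S : Finset (Fin n)} (hw : ∀ a ∈ S, a < w) (hd : 2 ≤ degIn G w S) :
    twoCol G q u v (insert w S) = 0 := by
  rw [twoCol_insert q u v hw]
  refine sum_eq_zero fun A hA => ?_
  split_ifs with h h1 h2 h2
  all_goals try simp only [add_zero, mul_zero]
  all_goals
    have := hG.split_cases hw (union_sdiff_of_subset (mem_powerset.1 hA)) disjoint_sdiff hd h.1 h.2
    tauto

lemma twoCol_insert_insert (q u v : K) {w p : Fin n} {S : Finset (Fin n)}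
    (hp : ∀ a ∈ S, a < p) (hpw : p < w) (hadj : G.Adj p w) (hd : degIn G w S = 0) :
    twoCol G q u v (insert w (insert p S)) = u * v * ∑ A ∈ S.powerset,
      if IsStable G A ∧ IsStable G (S \ A) then
        q ^ ascBetween G A (S \ A) * u ^ #A * v ^ #(S \ A) *
          ((if degIn G p A = 0 then q else 0) +
            if degIn G p (S \ A) = 0 then q ^ degIn G p A else 0) else 0 := by
  have hpS : p ∉ S := fun h => (hp p h).false
  rw [twoCol_insert q u v (by
      intro a ha
      rcases mem_insert.1 ha with rfl | ha
      · exact hpw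
      · exact (hp a ha).trans hpw),
    sum_splits_insert hpS (fun A B => if IsStable G A ∧ IsStable G B then
        q ^ ascBetween G A B * u ^ #A * v ^ #B *
          ((if degIn G w A = 0 then u else 0) +
            if degIn G w B = 0 then q ^ degIn G w A * v else 0) else 0), mul_sum]
  refine sum_congr rfl fun A hA => ?_
  have hAS := mem_powerset.1 hA
  have hpA : p ∉ A := fun h => hpS (hAS h)
  have hpB : p ∉ S \ A := fun h => hpS (sdiff_subset h)
  rw [degIn_eq_zero] at hd
  have h1 : degIn G w A = 0 := degIn_eq_zero.2 fun a ha => hd a (hAS ha)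
  have h2 : degIn G w (S \ A) = 0 := degIn_eq_zero.2 fun a ha => hd a (sdiff_subset ha)
  rw [ascBetween_insert_left_of_lt hpA fun b hb => hp b (sdiff_subset hb),
    ascBetween_insert_right_of_lt (fun a ha => hp a (hAS ha)) hpB,
    card_insert_of_notMem hpA, card_insert_of_notMem hpB, isStable_insert, isStable_insert,
    degIn_insert hpA, degIn_insert hpB, h1, h2]
  by_cases h1 : IsStable G A <;> by_cases h2 : IsStable G (S \ A) <;>
    simp only [h1, h2, hadj, true_and, and_true, false_and, and_false, if_true, if_false, add_zero,
    mul_zero, one_ne_zero, zero_add, pow_one]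
  split_ifs <;> ring

lemma IsNUIG.twoCol_comm (hG : IsNUIG G) (q u v : K) (S : Finset (Fin n)) :
    twoCol G q u v S = twoCol G q v u S := by
  induction S using Finset.strongInduction with
  | H T ih =>
    rcases T.eq_empty_or_nonempty with rfl | hT
    · simp [twoCol]
    obtain ⟨w, S, hw, rfl⟩ : ∃ w S, (∀ a ∈ S, a < w) ∧ T = insert w S :=
      ⟨T.max' hT, T.erase (T.max' hT), fun a ha => T.lt_max'_of_mem_erase_max' hT ha,
        (insert_erase (T.max'_mem hT)).symm⟩
    have hwS : w ∉ S := fun h => (hw w h).false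
    obtain hd | hd | hd : degIn G w S = 0 ∨ degIn G w S = 1 ∨ 2 ≤ degIn G w S := by omega
    · rw [twoCol_insert_of_degIn_eq_zero q u v hw hd, twoCol_insert_of_degIn_eq_zero q v u hw hd,
        ih S (ssubset_insert hwS), add_comm]
    · have hd' := hd
      rw [degIn_eq_card, card_eq_one] at hd'
      obtain ⟨p, hp⟩ := hd'
      have hpm : p ∈ S ∧ G.Adj p w := by
        have := mem_singleton_self p
        rwa [← hp, mem_filter] at this
      have hmax : ∀ a ∈ S.erase p, a < p := by
        intro a ha
        rw [mem_erase] at ha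
        by_contra hlt
        have hlt : p < a := lt_of_le_of_ne (not_lt.1 hlt) (Ne.symm ha.1)
        have : a ∈ ({a ∈ S | G.Adj a w} : Finset _) :=
          mem_filter.2 ⟨ha.2, (hG p a w hlt (hw a ha.2) hpm.2).2⟩
        rw [hp, mem_singleton] at this
        exact ha.1 this
      obtain ⟨S', hS', hpS', hlt⟩ : ∃ S', S = insert p S' ∧ p ∉ S' ∧ ∀ a ∈ S', a < p :=
        ⟨S.erase p, (insert_erase hpm.1).symm, notMem_erase _ _, hmax⟩
      subst hS'
      have hd0 : degIn G w S' = 0 := by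
        rw [degIn_insert hpS', if_pos hpm.2] at hd; omega
      rw [twoCol_insert_insert q u v hlt (hw p hpm.1) hpm.2 hd0,
        twoCol_insert_insert q v u hlt (hw p hpm.1) hpm.2 hd0, mul_comm u v]
      congr 1
      have ihS := ih S' ((ssubset_insert hpS').trans (ssubset_insert hwS))
      have key : ∀ u v : K, (∑ A ∈ S'.powerset, if IsStable G A ∧ IsStable G (S' \ A) then
          q ^ ascBetween G A (S' \ A) * u ^ #A * v ^ #(S' \ A) *
          ((if degIn G p A = 0 then q else 0) +
            if degIn G p (S' \ A) = 0 then q ^ degIn G p A else 0) else 0) =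
          (if degIn G p S' = 0 then q + 1 else if degIn G p S' = 1 then q else 0) *
            twoCol G q u v S' := by
        intro u v
        rw [twoCol, mul_sum]
        refine sum_congr rfl fun A hA => ?_
        have hU := union_sdiff_of_subset (mem_powerset.1 hA)
        have hD : Disjoint A (S' \ A) := disjoint_sdiff
        have hadd : degIn G p S' = degIn G p A + degIn G p (S' \ A) := by
          rw [← degIn_union hD, hU]
        by_cases hst : IsStable G A ∧ IsStable G (S' \ A)
        · have hc := fun h => hG.split_cases hlt hU hD h hst.1 hst.2
          rw [if_pos hst, if_pos hst]
          obtain h0 | h1 | h2 : degIn G p S' = 0 ∨ degIn G p S' = 1 ∨ 2 ≤ degIn G p S' := by omega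
          · rw [show degIn G p A = 0 by omega, show degIn G p (S' \ A) = 0 by omega, h0]
            simp; ring
          · obtain ⟨ha, hb⟩ | ⟨ha, hb⟩ : (degIn G p A = 0 ∧ degIn G p (S' \ A) = 1) ∨
                (degIn G p A = 1 ∧ degIn G p (S' \ A) = 0) := by omega
            · rw [ha, hb, h1]; simp; ring
            · rw [ha, hb, h1]; simp; ring
          · rw [if_neg (hc h2).1, if_neg (hc h2).2, if_neg (by omega), if_neg (by omega)]
            simp
        · rw [if_neg hst, if_neg hst, mul_zero]
      rw [key, key, ihS]
    · rw [hG.twoCol_insert_of_two_le q u v hw hd, hG.twoCol_insert_of_two_le q v u hw hd]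

/-- The indicator function of the stable sets. -/
noncomputable def stableInd (G : SimpleGraph (Fin n)) (A : Finset (Fin n)) : ℤ[X] :=
  if IsStable G A then 1 else 0

namespace SetAlg

/-- The indicator function of the stable sets of size `m`. -/
noncomputable def stab (G : SimpleGraph (Fin n)) (m : ℕ) : SetAlg G := grade (stableInd G) m

lemma coeff_C_X_pow_mul_X_pow (a b i : ℕ) :
    ((C X : ℤ[X][X]) ^ a * X ^ b).coeff i = if i = b then X ^ a else 0 := by
  rw [← C_pow, coeff_C_mul_X_pow]

lemma stab_mul_stab_apply (i j : ℕ) (S : Finset (Fin n)) :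
    (stab G i * stab G j) S =
      if #S = i + j then (twoCol G (C X : ℤ[X][X]) X 1 S).coeff i else 0 := by
  rw [mul_apply]
  split_ifs with h
  · rw [twoCol, finsetSum_coeff]
    refine sum_congr rfl fun A hA => ?_
    have := card_sdiff_add_card_eq_card (mem_powerset.1 hA)
    by_cases hi : #A = i
    · have hj : #(S \ A) = j := by omega
      by_cases h1 : IsStable G A <;> by_cases h2 : IsStable G (S \ A) <;>
        simp [stab, grade, stableInd, hi, hj, h1, h2, coeff_C_X_pow_mul_X_pow]
    · split_ifs <;>
        simp [stab, grade, hi, coeff_C_X_pow_mul_X_pow, Ne.symm hi]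
  · refine sum_eq_zero fun A hA => ?_
    have := card_sdiff_add_card_eq_card (mem_powerset.1 hA)
    by_cases hi : #A = i
    · have hj : #(S \ A) ≠ j := by omega
      simp [stab, grade, hj]
    · simp [stab, grade, hi]

lemma stab_mul_stab_apply' (i j : ℕ) (S : Finset (Fin n)) :
    (stab G i * stab G j) S =
      if #S = i + j then (twoCol G (C X : ℤ[X][X]) 1 X S).coeff j else 0 := by
  rw [mul_apply]
  split_ifs with h
  · rw [twoCol, finsetSum_coeff]
    refine sum_congr rfl fun A hA => ?_
    have := card_sdiff_add_card_eq_card (mem_powerset.1 hA)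
    by_cases hj : #(S \ A) = j
    · have hi : #A = i := by omega
      by_cases h1 : IsStable G A <;> by_cases h2 : IsStable G (S \ A) <;>
        simp [stab, grade, stableInd, hi, hj, h1, h2, coeff_C_X_pow_mul_X_pow]
    · split_ifs <;>
        simp [stab, grade, hj, coeff_C_X_pow_mul_X_pow, Ne.symm hj]
  · refine sum_eq_zero fun A hA => ?_
    have := card_sdiff_add_card_eq_card (mem_powerset.1 hA)
    by_cases hi : #A = i
    · have hj : #(S \ A) ≠ j := by omega
      simp [stab, grade, hj]
    · simp [stab, grade, hi]

lemma stab_commute (hG : IsNUIG G) (i j : ℕ) : Commute (stab G i) (stab G j) := by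
  ext1 S
  rw [stab_mul_stab_apply, stab_mul_stab_apply', hG.twoCol_comm, add_comm]

end SetAlg

end TwoColourings

section QInt

open Polynomial

lemma qint_zero : qint 0 = 0 := by simp [qint]

lemma qint_one : qint 1 = 1 := by simp [qint]

lemma qint_succ (m : ℕ) : qint (m + 1) = qint m + X ^ m := Finset.sum_range_succ _ _

lemma X_sub_one_mul_qint (m : ℕ) : (X - 1) * qint m = X ^ m - 1 := by
  rw [mul_comm]; exact geom_sum_mul _ _

lemma X_sub_one_ne_zero : (X - 1 : ℤ[X]) ≠ 0 := X_sub_C_ne_zero (1 : ℤ)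

lemma qint_add (a b : ℕ) : qint (a + b) = qint a + X ^ a * qint b := by
  apply mul_left_cancel₀ X_sub_one_ne_zero
  rw [X_sub_one_mul_qint]
  linear_combination -(X_sub_one_mul_qint a) - X ^ a * X_sub_one_mul_qint b

lemma qint_succ' (m : ℕ) : qint (m + 1) = 1 + X * qint m := by
  rw [add_comm, qint_add, qint_one, pow_one]

lemma qint_ne_zero {m : ℕ} (hm : m ≠ 0) : qint m ≠ 0 := by
  intro h
  have := X_sub_one_mul_qint m
  rw [h, mul_zero, eq_comm, sub_eq_zero] at this
  exact hm (by simpa using congrArg natDegree this)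

end QInt

section DecreasingTreeSums

open Finset Polynomial
open scoped Classical

variable {n : ℕ} {G : SimpleGraph (Fin n)}

/-- The product `s(G|_S)` of the `q`-integers `[b_i]_q`, over all `i ∈ S` but the smallest, for
the graph induced by `G` on `S`. -/
noncomputable def indS (G : SimpleGraph (Fin n)) (S : Finset (Fin n)) : ℤ[X] :=
  ∏ i ∈ S with ∃ j ∈ S, j < i, qint (degIn G i {j ∈ S | j < i})

@[simp] lemma indS_singleton (v : Fin n) : indS G {v} = 1 := by
  rw [indS, filter_false_of_mem (by simp), prod_empty]

lemma indS_insert_of_lt {w : Fin n} {S : Finset (Fin n)} (hS : S.Nonempty)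
    (hw : ∀ a ∈ S, a < w) : indS G (insert w S) = indS G S * qint (degIn G w S) := by
  have hwS : w ∉ S := fun h => (hw w h).false
  have h1 : ({i ∈ insert w S | ∃ j ∈ insert w S, j < i} : Finset (Fin n)) =
      insert w {i ∈ S | ∃ j ∈ S, j < i} := by
    rw [filter_insert, if_pos]
    · congr 1
      refine filter_congr fun i hi => ?_
      simp [(hw i hi).not_gt]
    · obtain ⟨j, hj⟩ := hS
      exact ⟨j, mem_insert_of_mem hj, hw j hj⟩
  rw [indS, h1, prod_insert (by simp [hwS]), mul_comm, indS]
  congr 1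
  · refine prod_congr rfl fun i hi => ?_
    rw [filter_insert, if_neg (hw i (mem_filter.1 hi).1).not_gt]
  · rw [filter_insert, if_neg (lt_irrefl w), filter_true_of_mem hw]

lemma IsNUIG.indS_insert_of_gt (hG : IsNUIG G) {v : Fin n} {S : Finset (Fin n)}
    (hS : S.Nonempty) (hv : ∀ a ∈ S, v < a) :
    indS G (insert v S) = indS G S * qint (degIn G v S) := by
  induction S using Finset.induction_on_max with
  | empty => simp at hS
  | insert w S hw ih =>
    have hvS : v ∉ S := fun h => (hv v (mem_insert_of_mem h)).false
    have hwS : w ∉ S := fun h => (hw w h).false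
    have hvw := hv w (mem_insert_self w S)
    have hlt : ∀ a ∈ insert v S, a < w := fun a ha => by
      rcases mem_insert.1 ha with rfl | ha
      · exact hvw
      · exact hw a ha
    rw [insert_comm, indS_insert_of_lt (insert_nonempty v S) hlt, degIn_insert hvS,
      degIn_insert hwS]
    rcases S.eq_empty_or_nonempty with rfl | hne
    · simp [G.adj_comm]
    · rw [ih hne fun a ha => hv a (mem_insert_of_mem ha), indS_insert_of_lt hne hw]
      by_cases hadj : G.Adj v w
      · have h1 : degIn G v S = #S := by
          rw [degIn_eq_card, filter_true_of_mem]
          exact fun a ha => (hG v a w (hv a (mem_insert_of_mem ha)) (hw a ha) hadj).1.symm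
        have h2 : degIn G w S = #S := by
          rw [degIn_eq_card, filter_true_of_mem]
          exact fun a ha => (hG v a w (hv a (mem_insert_of_mem ha)) (hw a ha) hadj).2
        rw [h1, h2, if_pos hadj, if_pos hadj.symm]
      · rw [if_neg hadj, if_neg fun h => hadj h.symm, zero_add, zero_add]
        ring

lemma stableInd_insert (v : Fin n) (A : Finset (Fin n)) :
    stableInd G (insert v A) = if degIn G v A = 0 then stableInd G A else 0 := by
  by_cases h1 : IsStable G A <;> by_cases h2 : degIn G v A = 0 <;>
    simp [stableInd, isStable_insert, h1, h2]

lemma NbrClique.one_sub_qint_mul {v : Fin n} {A : Finset (Fin n)} (h : NbrClique G v A) :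
    (1 - qint (degIn G v A)) * stableInd G A = stableInd G (insert v A) := by
  rw [stableInd_insert]
  obtain hd | hd | hd : degIn G v A = 0 ∨ degIn G v A = 1 ∨ 2 ≤ degIn G v A := by omega
  · simp [hd, qint_zero]
  · simp [hd, qint_one]
  · simp [stableInd, h.not_isStable hd]

/-- The product `s(G|_S)` with the sign `(-1) ^ (#S + 1)`. -/
noncomputable def signedS (G : SimpleGraph (Fin n)) (S : Finset (Fin n)) : ℤ[X] :=
  (-1) ^ (#S + 1) * indS G S

@[simp] lemma signedS_singleton (v : Fin n) : signedS G {v} = 1 := by simp [signedS]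

lemma signedS_insert_of_lt {w : Fin n} {S : Finset (Fin n)} (hS : S.Nonempty)
    (hw : ∀ a ∈ S, a < w) : signedS G (insert w S) = -signedS G S * qint (degIn G w S) := by
  rw [signedS, indS_insert_of_lt hS hw, card_insert_of_notMem fun h => (hw w h).false, signedS]
  ring

lemma IsNUIG.signedS_insert_of_gt (hG : IsNUIG G) {w : Fin n} {S : Finset (Fin n)}
    (hS : S.Nonempty) (hw : ∀ a ∈ S, w < a) :
    signedS G (insert w S) = -signedS G S * qint (degIn G w S) := by
  rw [signedS, hG.indS_insert_of_gt hS hw, card_insert_of_notMem fun h => (hw w h).false, signedS]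
  ring

lemma IsNUIG.sum_stableInd_mul_signedS (hG : IsNUIG G) {v : Fin n} {S : Finset (Fin n)}
    (hv : ∀ a ∈ S, v < a) :
    ∑ A ∈ S.powerset, X ^ ascBetween G A (S \ A) * stableInd G A *
      signedS G (insert v (S \ A)) = stableInd G (insert v S) := by
  induction S using Finset.induction_on_max with
  | empty => simp [stableInd, IsStable]
  | insert w S hw ih =>
    have hwS : w ∉ S := fun h => (hw w h).false
    have hvS : ∀ a ∈ S, v < a := fun a ha => hv a (mem_insert_of_mem ha)
    have hvw := hv w (mem_insert_self w S)
    have hlt : ∀ a ∈ insert v S, a < w := fun a ha => by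
      rcases mem_insert.1 ha with rfl | ha
      · exact hvw
      · exact hw a ha
    have hc := hG.nbrClique_of_lt hlt
    rw [insert_comm, ← hc.one_sub_qint_mul, ← ih hvS, mul_sum,
      sum_splits_insert hwS (fun A B => X ^ ascBetween G A B * stableInd G A *
        signedS G (insert v B))]
    refine sum_splits_congr (F := fun A B => X ^ ascBetween G (insert w A) B *
      stableInd G (insert w A) * signedS G (insert v B) +
      X ^ ascBetween G A (insert w B) * stableInd G A * signedS G (insert v (insert w B)))
      (H := fun A B => (1 - qint (degIn G w (insert v S))) * (X ^ ascBetween G A B *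
        stableInd G A * signedS G (insert v B))) ?_
    rintro A B rfl hdis
    have hwA : w ∉ A := fun h => hwS (mem_union_left _ h)
    have hwB : w ∉ B := fun h => hwS (mem_union_right _ h)
    have hvA : v ∉ A := fun h => (hvS v (mem_union_left _ h)).false
    have hltB : ∀ b ∈ insert v B, b < w := fun b hb =>
      hlt b (insert_subset_insert v subset_union_right hb)
    rw [ascBetween_insert_left_of_lt hwA fun b hb => hw b (mem_union_right _ hb),
      ascBetween_insert_right_of_lt (fun a ha => hw a (mem_union_left _ ha)) hwB, insert_comm v w,
      signedS_insert_of_lt (insert_nonempty v B) hltB, ← union_insert, degIn_union (by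
        rw [disjoint_insert_right]; exact ⟨hvA, hdis⟩), stableInd_insert]
    by_cases hst : IsStable G A
    · have h2 : degIn G w A < 2 := by
        by_contra h
        exact (hc.subset ((subset_union_left (s₂ := B)).trans (subset_insert v _))).not_isStable
          (not_lt.1 h) hst
      obtain hd | hd : degIn G w A = 0 ∨ degIn G w A = 1 := by omega
      · rw [hd, if_pos rfl, zero_add]; ring
      · rw [hd, if_neg one_ne_zero, add_comm 1, qint_succ']; ring
    · simp [stableInd, hst]

lemma IsNUIG.sum_stableInd_mul_qint_mul_signedS (hG : IsNUIG G) (S : Finset (Fin n)) :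
    ∑ A ∈ S.powerset, X ^ ascBetween G A (S \ A) * stableInd G A *
      (qint #(S \ A) * signedS G (S \ A)) = #S * stableInd G S := by
  induction S using Finset.induction_on_min with
  | empty => simp [qint_zero]
  | insert v S hv ih =>
    have hvS : v ∉ S := fun h => (hv v h).false
    have hc := hG.nbrClique_of_gt hv
    have key : ∑ A ∈ S.powerset, ((1 - qint (degIn G v S)) * (X ^ ascBetween G A (S \ A) *
        stableInd G A * (qint #(S \ A) * signedS G (S \ A))) +
        X ^ ascBetween G A (S \ A) * stableInd G A * signedS G (insert v (S \ A))) =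
        (#S + 1) * stableInd G (insert v S) := by
      rw [sum_add_distrib, ← mul_sum, ih, hG.sum_stableInd_mul_signedS hv, ← hc.one_sub_qint_mul]
      ring
    rw [card_insert_of_notMem hvS, Nat.cast_add, Nat.cast_one, ← key,
      sum_splits_insert hvS (fun A B => X ^ ascBetween G A B * stableInd G A *
        (qint #B * signedS G B))]
    refine sum_splits_congr (F := fun A B => X ^ ascBetween G (insert v A) B *
      stableInd G (insert v A) * (qint #B * signedS G B) +
      X ^ ascBetween G A (insert v B) * stableInd G A *
        (qint #(insert v B) * signedS G (insert v B)))
      (H := fun A B => (1 - qint (degIn G v S)) * (X ^ ascBetween G A B *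
        stableInd G A * (qint #B * signedS G B)) +
        X ^ ascBetween G A B * stableInd G A * signedS G (insert v B)) ?_
    rintro A B rfl hdis
    have hvA : v ∉ A := fun h => hvS (mem_union_left _ h)
    have hvB : v ∉ B := fun h => hvS (mem_union_right _ h)
    have hltB : ∀ b ∈ B, v < b := fun b hb => hv b (mem_union_right _ hb)
    have hB : qint #B * signedS G (insert v B) =
        -(qint (degIn G v B) * (qint #B * signedS G B)) := by
      rcases B.eq_empty_or_nonempty with rfl | hne
      · simp [qint_zero]
      · rw [hG.signedS_insert_of_gt hne hltB]; ring
    rw [ascBetween_insert_left_of_gt hvA hltB,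
      ascBetween_insert_right_of_gt (fun a ha => hv a (mem_union_left _ ha)) hvB,
      card_insert_of_notMem hvB, qint_succ', degIn_union hdis, stableInd_insert]
    by_cases hst : IsStable G A
    · have h2 : degIn G v A < 2 := by
        by_contra h
        exact (hc.subset subset_union_left).not_isStable (not_lt.1 h) hst
      obtain hd | hd : degIn G v A = 0 ∨ degIn G v A = 1 := by omega
      · rw [hd, if_pos rfl, zero_add]
        have h3 : qint (degIn G v B) + X ^ degIn G v B = 1 + X * qint (degIn G v B) := by
          rw [← qint_succ, qint_succ']
        linear_combination X ^ (ascBetween G A B + 1) * stableInd G A * hB +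
          X ^ ascBetween G A B * stableInd G A * (qint #B * signedS G B) * h3
      · rw [hd, if_neg one_ne_zero, add_comm 1 (degIn G v B), qint_succ']
        linear_combination X ^ (ascBetween G A B + 1) * stableInd G A * hB
    · simp [stableInd, hst]

end DecreasingTreeSums

section NewtonClosure

open Finset

lemma mem_closure_of_newton {R : Type*} [Ring R] {g z : ℕ → R} (h0 : g 0 = 1)
    (h : ∀ m : ℕ, (m : R) * g m = ∑ a ∈ antidiagonal m with a.1 < m, g a.1 * z a.2) {m : ℕ}
    (hm : m ≠ 0) : z m ∈ Subring.closure (Set.range g) := by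
  induction m using Nat.strong_induction_on with
  | _ m ih =>
    have hg : ∀ i, g i ∈ Subring.closure (Set.range g) := fun i =>
      Subring.subset_closure ⟨i, rfl⟩
    have hz := h m
    have hmem : (0, m) ∈ {a ∈ antidiagonal m | a.1 < m} := by
      simp [Nat.pos_of_ne_zero hm]
    rw [← add_sum_erase _ _ hmem, h0, one_mul] at hz
    rw [← sub_eq_of_eq_add hz]
    refine sub_mem (mul_mem (natCast_mem _ m) (hg m)) (sum_mem fun a ha => ?_)
    simp only [mem_erase, mem_filter, HasAntidiagonal.mem_antidiagonal, ne_eq, Prod.ext_iff] at ha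
    exact mul_mem (hg _) (ih _ (by omega) (by omega))

end NewtonClosure

section DecreasingTreeAlgebra

open Finset Polynomial
open scoped Classical

variable {n : ℕ} {G : SimpleGraph (Fin n)}

namespace SetAlg

/-- The function `S ↦ s(G|_S)` on the sets of size `m`. -/
noncomputable def dec (G : SimpleGraph (Fin n)) (m : ℕ) : SetAlg G := grade (indS G) m

lemma dec_apply (m : ℕ) (S : Finset (Fin n)) :
    dec G m S = if #S = m then indS G S else 0 := rfl

/-- The analogue in `SetAlg G` of the `m`-th power sum, up to a sign. -/
noncomputable def pw (G : SimpleGraph (Fin n)) (m : ℕ) : SetAlg G :=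
  ((-1) ^ (m + 1) * qint m) • dec G m

lemma smul_cancel {r : ℤ[X]} (hr : r ≠ 0) {f g : SetAlg G} (h : r • f = r • g) : f = g := by
  ext1 S
  exact mul_left_cancel₀ hr (congrFun h S)

lemma stab_zero : stab G 0 = 1 := by
  ext1 S
  rw [stab, grade_apply, one_apply]
  by_cases h : S = ∅
  · simp [h, stableInd, isStable_empty]
  · simp [h]

lemma pw_apply (m : ℕ) (S : Finset (Fin n)) :
    pw G m S = if #S = m then qint m * signedS G S else 0 := by
  rw [pw, smul_apply, dec, grade_apply]
  split_ifs with h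
  · rw [signedS, h]; ring
  · simp

lemma newton (hG : IsNUIG G) (m : ℕ) :
    (m : SetAlg G) * stab G m = ∑ a ∈ antidiagonal m with a.1 < m, stab G a.1 * pw G a.2 := by
  have hall : ∑ a ∈ antidiagonal m with a.1 < m, stab G a.1 * pw G a.2 =
      ∑ a ∈ antidiagonal m, stab G a.1 * pw G a.2 := by
    refine sum_subset (filter_subset _ _) fun a ha hna => ?_
    simp only [mem_filter, HasAntidiagonal.mem_antidiagonal] at ha hna
    have h2 : a.2 = 0 := by omega
    simp [h2, pw, qint_zero]
  rw [hall, ← nsmul_eq_mul, ← Nat.cast_smul_eq_nsmul ℤ[X]]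
  ext1 S
  simp only [smul_apply, sum_apply, mul_apply]
  rw [sum_comm]
  by_cases hS : #S = m
  · rw [stab, grade_apply, if_pos hS, ← hS, ← hG.sum_stableInd_mul_qint_mul_signedS]
    refine sum_congr rfl fun A hA => ?_
    rw [mem_powerset] at hA
    have hc : #A + #(S \ A) = #S := by rw [add_comm, card_sdiff_add_card_eq_card hA]
    rw [sum_eq_single (#A, #(S \ A))]
    · simp [stab, grade_apply, pw_apply]
    · rintro ⟨i, j⟩ - hne
      simp only [stab, grade_apply, pw_apply]
      by_cases hi : #A = i
      · rw [if_neg (c := #(S \ A) = j), mul_zero]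
        rintro rfl
        exact hne (by rw [hi])
      · simp [hi]
    · simp [hc]
  · rw [stab, grade_apply, if_neg hS, mul_zero, eq_comm]
    refine sum_eq_zero fun A hA => sum_eq_zero fun a ha => ?_
    rw [mem_powerset] at hA
    have hc : #A + #(S \ A) = #S := by rw [add_comm, card_sdiff_add_card_eq_card hA]
    rw [HasAntidiagonal.mem_antidiagonal] at ha
    simp only [stab, grade_apply, pw_apply]
    by_cases hi : #A = a.1
    · rw [if_neg (c := #(S \ A) = a.2), mul_zero]
      omega
    · simp [hi]

lemma pw_commute (hG : IsNUIG G) {i j : ℕ} (hi : i ≠ 0) (hj : j ≠ 0) :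
    Commute (pw G i) (pw G j) := by
  have h1 := mem_closure_of_newton stab_zero (newton hG) hi
  have h2 := mem_closure_of_newton stab_zero (newton hG) hj
  have hc := Subring.closure_le_centralizer_centralizer (Set.range (stab G))
  have hr : Set.range (stab G) ⊆ Set.centralizer (Set.range (stab G)) := by
    rintro _ ⟨a, rfl⟩ _ ⟨b, rfl⟩
    exact stab_commute hG b a
  exact hc h2 _ (Set.centralizer_subset (Set.range_subset_iff.2 fun a => hr ⟨a, rfl⟩) (hc h1))

lemma dec_commute (hG : IsNUIG G) {i j : ℕ} (hi : i ≠ 0) (hj : j ≠ 0) :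
    Commute (dec G i) (dec G j) := by
  have hne : ∀ {m : ℕ}, m ≠ 0 → ((-1) ^ (m + 1) * qint m : ℤ[X]) ≠ 0 := fun h =>
    mul_ne_zero (pow_ne_zero _ (neg_ne_zero.2 one_ne_zero)) (qint_ne_zero h)
  have h := pw_commute hG hi hj
  rw [commute_iff_eq, pw, pw, smul_mul_smul_comm, smul_mul_smul_comm, mul_comm (_ * qint j)] at h
  exact smul_cancel (mul_ne_zero (hne hi) (hne hj)) h

/-- The restriction of `f` to the sets containing `v`. -/
noncomputable def marked (v : Fin n) (f : SetAlg G) : SetAlg G :=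
  fun S => if v ∈ S then f S else 0

lemma marked_apply (v : Fin n) (f : SetAlg G) (S : Finset (Fin n)) :
    marked v f S = if v ∈ S then f S else 0 := rfl

lemma marked_mul (v : Fin n) (f g : SetAlg G) :
    marked v (f * g) = marked v f * g + f * marked v g := by
  ext1 S
  simp only [marked_apply, add_apply, mul_apply, ← sum_add_distrib]
  by_cases hv : v ∈ S
  · rw [if_pos hv]
    refine sum_congr rfl fun A hA => ?_
    by_cases hA : v ∈ A <;> simp [hv, hA]
  · rw [if_neg hv, eq_comm]
    refine sum_eq_zero fun A hA => ?_
    have hvA : v ∉ A := fun h => hv (mem_powerset.1 hA h)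
    simp [hv, hvA]

/-- The indicator function of `{v}`. -/
noncomputable def single (G : SimpleGraph (Fin n)) (v : Fin n) : SetAlg G :=
  fun S => if S = {v} then 1 else 0

lemma single_apply (v : Fin n) (S : Finset (Fin n)) :
    single G v S = if S = {v} then 1 else 0 := rfl

lemma marked_dec_one (v : Fin n) : marked v (dec G 1) = single G v := by
  ext1 S
  rw [marked_apply, dec, grade_apply, single_apply]
  by_cases h : S = {v}
  · simp [h]
  · rw [if_neg h]
    split_ifs with h1 h2
    · obtain ⟨w, rfl⟩ := card_eq_one.1 h2
      simp only [mem_singleton] at h1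
      exact absurd (by rw [h1]) h
    · rfl
    · rfl

lemma single_mul_apply {v : Fin n} (hv : ∀ w, v ≤ w) (f : SetAlg G) (S : Finset (Fin n)) :
    (single G v * f) S = if v ∈ S then X ^ degIn G v (S.erase v) * f (S.erase v) else 0 := by
  rw [mul_apply]
  split_ifs with h
  · rw [sum_eq_single {v}]
    · have hasc := ascBetween_insert_left_of_gt (G := G) (v := v) (A := ∅) (B := S.erase v)
        (by simp) (fun b hb => lt_of_le_of_ne (hv b) (ne_of_mem_erase hb).symm)
      rw [ascBetween_empty_left, zero_add, insert_empty_eq] at hasc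
      rw [sdiff_singleton_eq_erase, single_apply, if_pos rfl, mul_one, hasc]
    · intro A _ hA
      simp [single_apply, hA]
    · simp [h]
  · refine sum_eq_zero fun A hA => ?_
    have : A ≠ {v} := by
      rintro rfl
      exact h (mem_powerset.1 hA (mem_singleton_self v))
    simp [single_apply, this]

lemma mul_single_apply {v : Fin n} (hv : ∀ w, v ≤ w) (f : SetAlg G) (S : Finset (Fin n)) :
    (f * single G v) S = if v ∈ S then f (S.erase v) else 0 := by
  rw [mul_apply]
  split_ifs with h
  · have hs : S \ S.erase v = {v} := by
      ext a; simp only [mem_sdiff, mem_erase, mem_singleton]; grind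
    rw [sum_eq_single (S.erase v)]
    · have hasc := ascBetween_insert_right_of_gt (G := G) (v := v) (A := S.erase v) (B := ∅)
        (fun b hb => lt_of_le_of_ne (hv b) (ne_of_mem_erase hb).symm) (by simp)
      rw [ascBetween_empty_right, insert_empty_eq] at hasc
      rw [hs, single_apply, if_pos rfl, mul_one, hasc, pow_zero, one_mul]
    · intro A hA hne
      rw [mem_powerset] at hA
      have : S \ A ≠ {v} := fun hSA => hne (by
        rw [← sdiff_singleton_eq_erase, ← hSA, Finset.sdiff_sdiff_eq_self hA])
      simp [single_apply, this]
    · simp [erase_subset]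
  · refine sum_eq_zero fun A hA => ?_
    have : S \ A ≠ {v} := fun hSA => h (sdiff_subset (hSA ▸ mem_singleton_self v))
    simp [single_apply, this]

lemma single_commutator (hG : IsNUIG G) {v : Fin n} (hv : ∀ w, v ≤ w) {m : ℕ} (hm : m ≠ 0) :
    single G v * dec G m - dec G m * single G v = (X - 1 : ℤ[X]) • marked v (dec G (m + 1)) := by
  ext1 S
  rw [sub_apply, single_mul_apply hv, mul_single_apply hv, smul_apply, marked_apply]
  split_ifs with h
  · rw [dec, grade_apply, dec, grade_apply]
    have hc := card_erase_add_one h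
    split_ifs with h1 h2 h2
    · have hne : (S.erase v).Nonempty := card_pos.1 (by omega)
      have hi := hG.indS_insert_of_gt hne fun a ha =>
        lt_of_le_of_ne (hv a) (ne_of_mem_erase ha).symm
      rw [insert_erase h] at hi
      rw [hi]
      linear_combination -indS G (S.erase v) * X_sub_one_mul_qint (degIn G v (S.erase v))
    · omega
    · omega
    · ring
  · ring

/-- The commutator of a marked decreasing tree sum with an unmarked one. -/
lemma marked_dec_commutator (hG : IsNUIG G) {v : Fin n} (hv : ∀ w, v ≤ w) (m : ℕ) {j : ℕ}
    (hj : j ≠ 0) :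
    marked v (dec G (m + 1)) * dec G j - dec G j * marked v (dec G (m + 1)) =
      (X - 1 : ℤ[X]) • marked v (dec G (m + 1 + j)) := by
  induction m generalizing j with
  | zero => rw [zero_add, marked_dec_one, single_commutator hG hv hj, add_comm]
  | succ m ih =>
    apply smul_cancel X_sub_one_ne_zero
    have hc := (dec_commute hG m.succ_ne_zero hj).eq
    have hd := (dec_commute hG m.succ_ne_zero j.succ_ne_zero).eq
    replace hd := congrArg (marked v) hd
    rw [marked_mul, marked_mul] at hd
    have h1 := single_commutator hG hv m.succ_ne_zero
    have h2 := single_commutator hG hv hj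
    have h3 := ih j.succ_ne_zero
    rw [show m + 1 + (j + 1) = m + 1 + 1 + j by ring] at h3
    have h4 : marked v (dec G (m + 1)) * dec G (j + 1) - dec G (j + 1) * marked v (dec G (m + 1)) =
        marked v (dec G (j + 1)) * dec G (m + 1) - dec G (m + 1) * marked v (dec G (j + 1)) := by
      rw [sub_eq_sub_iff_add_eq_add, hd]
    rw [← h3, h4, smul_sub, smul_sub, ← smul_mul_assoc, ← mul_smul_comm, ← smul_mul_assoc,
      ← mul_smul_comm, ← h1, ← h2]
    have e1 : single G v * dec G (m + 1) * dec G j = single G v * dec G j * dec G (m + 1) := by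
      rw [mul_assoc, hc, mul_assoc]
    have e2 : dec G j * (dec G (m + 1) * single G v) =
        dec G (m + 1) * (dec G j * single G v) := by
      rw [← mul_assoc, ← hc, mul_assoc]
    rw [sub_mul, mul_sub, sub_mul, mul_sub, e1, e2]
    simp only [mul_assoc]
    abel

end SetAlg

end DecreasingTreeAlgebra

section ElementaryDuality

open Finset MvPolynomial
open scoped Classical

variable {σ τ R : Type*} [Fintype σ] [Fintype τ] [CommSemiring R]

lemma coeff_prod_X {ι : Type*} (s : Finset ι) (f : ι → τ) (α : τ →₀ ℕ) :
    coeff α (∏ i ∈ s, X (f i) : MvPolynomial τ R) =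
      if ∀ c, #{i ∈ s | f i = c} = α c then 1 else 0 := by
  have h : (∏ i ∈ s, X (f i) : MvPolynomial τ R) =
      monomial (∑ i ∈ s, Finsupp.single (f i) 1) 1 := (monomial_sum_one s _).symm
  rw [h, coeff_monomial]
  refine if_congr ?_ rfl rfl
  simp [Finsupp.ext_iff, Finsupp.finsetSum_apply, Finsupp.single_apply]

lemma coeff_prod_esymm (μ : σ → ℕ) (α : τ →₀ ℕ) :
    coeff α (∏ j, esymm τ R (μ j)) =
      #{p : σ → Finset τ | (∀ j, #(p j) = μ j) ∧ ∀ i, #{j | i ∈ p j} = α i} := by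
  simp only [esymm]
  rw [prod_univ_sum, coeff_sum, card_eq_sum_ones, Nat.cast_sum, sum_filter]
  rw [← sum_subset (subset_univ (Fintype.piFinset fun j => powersetCard (μ j) univ))]
  · refine sum_congr rfl fun p hp => ?_
    simp only [Fintype.mem_piFinset, mem_powersetCard_univ] at hp
    rw [prod_sigma' univ p fun _ i => (X i : MvPolynomial τ R), coeff_prod_X]
    have h : ∀ i, #{x ∈ univ.sigma p | x.2 = i} = #{j | i ∈ p j} := fun i =>
      card_bij' (fun x _ => x.1) (fun j _ => ⟨j, i⟩)
        (by rintro ⟨j, i'⟩; simp only [mem_filter, mem_sigma]; rintro ⟨h, rfl⟩; simpa using h)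
        (by simp) (by rintro ⟨j, i⟩; simp +contextual) (by simp)
    simp [h, hp]
  · intro p _ hp
    rw [if_neg]
    simp only [Fintype.mem_piFinset, mem_powersetCard_univ] at hp
    exact fun h => hp h.1

lemma coeff_prod_esymm_comm (μ : σ →₀ ℕ) (α : τ →₀ ℕ) :
    coeff α (∏ j, esymm τ R (μ j)) = coeff μ (∏ i, esymm σ R (α i)) := by
  rw [coeff_prod_esymm, coeff_prod_esymm]
  congr 1
  refine card_bij' (fun p _ i => {j | i ∈ p j}) (fun p _ j => {i | j ∈ p i}) ?_ ?_ ?_ ?_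
  · intro p hp
    simp only [mem_filter, mem_univ, true_and] at hp ⊢
    refine ⟨hp.2, fun j => ?_⟩
    rw [← hp.1 j]; congr 1; ext; simp
  · intro p hp
    simp only [mem_filter, mem_univ, true_and] at hp ⊢
    refine ⟨hp.2, fun j => ?_⟩
    rw [← hp.1 j]; congr 1; ext; simp
  · intro p _; ext; simp
  · intro p _; ext; simp

end ElementaryDuality

section PartitionExponents

open Finset

@[to_additive]
lemma prod_getD {M : Type*} [CommMonoid M] {f : ℕ → M} (hf : f 0 = 1) (l : List ℕ) {n : ℕ}
    (hl : l.length ≤ n) : ∏ i : Fin n, f (l.getD i 0) = (l.map f).prod := by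
  rw [Fin.prod_univ_eq_prod_range (fun i => f (l.getD i 0)) n,
    ← prod_subset (range_subset_range.2 hl)]
  · induction l with
    | nil => simp
    | cons a l ih =>
      rw [List.length_cons, prod_range_succ', List.map_cons, List.prod_cons, mul_comm]
      simpa using congrArg (f a * ·) (ih (by simp at hl; omega))
  · intro i _ hi
    rw [List.getD_eq_default _ _ (by simpa using hi), hf]

/-- The parts of `μ` in decreasing order, as an exponent vector of length `n`. -/
noncomputable def partExp {n : ℕ} (μ : n.Partition) : Fin n →₀ ℕ :=
  Finsupp.equivFunOnFinite.symm fun i => (μ.parts.sort (· ≥ ·)).getD i 0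

variable {n : ℕ}

lemma length_sort_parts_le (μ : n.Partition) : (μ.parts.sort (· ≥ ·)).length ≤ n := by
  rw [Multiset.length_sort]
  have h := Multiset.card_nsmul_le_sum (s := μ.parts) (a := 1) fun x hx => μ.parts_pos hx
  simpa [μ.parts_sum] using h

lemma partExp_apply (μ : n.Partition) (i : Fin n) :
    partExp μ i = (μ.parts.sort (· ≥ ·)).getD i 0 := rfl

@[to_additive]
lemma prod_partExp {M : Type*} [CommMonoid M] {f : ℕ → M} (hf : f 0 = 1) (μ : n.Partition) :
    ∏ i, f (partExp μ i) = (μ.parts.map f).prod := by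
  simp only [partExp_apply]
  rw [prod_getD hf _ (length_sort_parts_le μ), ← Multiset.prod_coe, ← Multiset.map_coe,
    Multiset.sort_eq]

lemma partExp_antitone (μ : n.Partition) : Antitone (partExp μ) := by
  intro i j hij
  rw [partExp_apply, partExp_apply]
  rcases hij.eq_or_lt with rfl | hij
  · rfl
  by_cases hj : (j : ℕ) < (μ.parts.sort (· ≥ ·)).length
  · rw [List.getD_eq_getElem _ _ hj, List.getD_eq_getElem _ _ (lt_trans hij hj)]
    exact List.pairwise_iff_getElem.1 (Multiset.pairwise_sort μ.parts (· ≥ ·)) _ _ _ _ hij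
  · rw [List.getD_eq_default _ _ (not_lt.1 hj)]
    exact Nat.zero_le _

lemma sum_partExp_eq_parts (μ : n.Partition) :
    ∑ i, (if partExp μ i = 0 then 0 else {partExp μ i} : Multiset ℕ) = μ.parts := by
  rw [sum_partExp (f := fun a => if a = 0 then 0 else ({a} : Multiset ℕ)) (if_pos rfl),
    Multiset.map_congr rfl fun x hx => if_neg (μ.parts_pos hx).ne', Multiset.sum_map_singleton]

variable [NeZero n]

lemma single_add_single_eq_partExp {a b : ℕ} (hb : 0 < b) (hab : b < a) {μ : n.Partition}
    {i j : Fin n} (hij : i ≠ j) :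
    Finsupp.single i a + Finsupp.single j b = partExp μ ↔
      i = 0 ∧ j = 1 ∧ μ.parts = {a, b} := by
  have h1 : ((1 : Fin n) : ℕ) = 1 := by
    rw [Fin.val_one', Nat.mod_eq_of_lt]
    have := Fin.val_ne_of_ne hij
    omega
  constructor
  · intro h
    have hv : ∀ x, partExp μ x = (if x = i then a else 0) + if x = j then b else 0 := fun x => by
      simp [← h, Finsupp.single_apply, eq_comm]
    have hi : i = 0 := by
      by_contra hi
      have := partExp_antitone μ (Fin.zero_le i)
      rw [hv, hv, if_pos rfl, if_neg (Ne.symm hi)] at this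
      split_ifs at this <;> omega
    have hj : j = 1 := by
      by_contra hj
      have hj0 : (j : ℕ) ≠ 0 := fun h0 => hij (by rw [hi]; exact Fin.ext h0.symm)
      have := partExp_antitone μ (show (1 : Fin n) ≤ j by rw [Fin.le_def, h1]; omega)
      rw [hv, hv, if_pos rfl, if_neg (Ne.symm hj), if_neg (c := (1 : Fin n) = i)] at this
      · omega
      · rw [hi, Fin.ext_iff, h1]; simp
    refine ⟨hi, hj, ?_⟩
    rw [← sum_partExp_eq_parts, ← sum_subset (subset_univ {i, j}), sum_pair hij, hv, hv]
    · simp [hij, hij.symm, hb.ne', (hb.trans hab).ne']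
    · intro x _ hx
      simp only [mem_insert, mem_singleton, not_or] at hx
      simp [hv, hx]
  · rintro ⟨rfl, rfl, h⟩
    ext x
    rw [partExp_apply, h, Multiset.insert_eq_cons, Multiset.sort_cons _ _ _ (by simp [hab.le]),
      Multiset.sort_singleton, Finsupp.add_apply, Finsupp.single_apply, Finsupp.single_apply]
    simp only [Fin.ext_iff, h1, Fin.val_zero]
    rcases x with ⟨_ | _ | x, hx⟩ <;> simp

end PartitionExponents

section ColouringWords

open Finset Polynomial
open scoped Classical

variable {n : ℕ} {G : SimpleGraph (Fin n)}

/-- The number of edges `{a, b}` of `G` inside `S` with `a < b` and `κ a < κ b`. -/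
noncomputable def ascIn (G : SimpleGraph (Fin n)) (S : Finset (Fin n)) (κ : Fin n → ℕ) : ℕ :=
  ∑ a ∈ S, ∑ b ∈ S, if a < b ∧ G.Adj a b ∧ κ a < κ b then 1 else 0

namespace SetAlg

/-- The maps sending `S` to `{0, …, N - 1}` and everything else to `0`. -/
noncomputable def colourings (S : Finset (Fin n)) (N : ℕ) : Finset (Fin n → ℕ) :=
  Fintype.piFinset fun v => if v ∈ S then range N else {0}

lemma mem_colourings {S : Finset (Fin n)} {N : ℕ} {κ : Fin n → ℕ} :
    κ ∈ colourings S N ↔ (∀ v ∈ S, κ v < N) ∧ ∀ v ∉ S, κ v = 0 := by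
  rw [colourings, Fintype.mem_piFinset]
  constructor
  · intro h
    refine ⟨fun v hv => ?_, fun v hv => ?_⟩
    · simpa [hv] using h v
    · simpa [hv] using h v
  · rintro ⟨h1, h2⟩ v
    by_cases hv : v ∈ S
    · simpa [hv] using h1 v hv
    · simpa [hv] using h2 v hv

lemma ascIn_extend {S A : Finset (Fin n)} (hA : A ⊆ S) {N : ℕ} {κ κ' : Fin n → ℕ}
    (h1 : ∀ v ∈ A, κ' v = κ v ∧ κ v < N) (h2 : ∀ v ∈ S \ A, κ' v = N) :
    ascIn G S κ' = ascIn G A κ + ascBetween G A (S \ A) := by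
  have hS : S = A ∪ (S \ A) := (union_sdiff_of_subset hA).symm
  have hd : Disjoint A (S \ A) := disjoint_sdiff
  rw [ascIn]
  nth_rw 1 [hS]
  rw [sum_union hd, sum_eq_zero (s := S \ A), add_zero, ascIn, ascBetween, ← sum_add_distrib]
  · refine sum_congr rfl fun a ha => ?_
    nth_rw 1 [hS]
    rw [sum_union hd]
    congr 1
    · exact sum_congr rfl fun b hb => by rw [(h1 a ha).1, (h1 b hb).1]
    · exact sum_congr rfl fun b hb => by
        rw [(h1 a ha).1, h2 b hb]; simp [(h1 a ha).2]
  · intro a ha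
    refine sum_eq_zero fun b hb => if_neg ?_
    rw [h2 a ha]
    by_cases hbA : b ∈ A
    · have := h1 b hbA; omega
    · rw [h2 b (mem_sdiff.2 ⟨hb, hbA⟩)]; omega

lemma prod_map_range_apply (f : ℕ → SetAlg G) (N : ℕ) (S : Finset (Fin n)) :
    ((List.range N).map f).prod S =
      ∑ κ ∈ colourings S N, X ^ ascIn G S κ * ∏ c ∈ range N, f c {v ∈ S | κ v = c} := by
  induction N generalizing S with
  | zero =>
    rw [List.range_zero, List.map_nil, List.prod_nil, one_apply]
    split_ifs with h
    · have : colourings S 0 = {fun _ => 0} := by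
        ext κ
        simp [mem_colourings, h, funext_iff]
      rw [this]
      simp [h, ascIn]
    · obtain ⟨v, hv⟩ := nonempty_iff_ne_empty.2 h
      have : colourings S 0 = ∅ := by
        ext κ
        simp only [mem_colourings, not_lt_zero, notMem_empty, iff_false]
        exact fun hκ => hκ.1 v hv
      simp [this]
  | succ N ih =>
    rw [List.range_succ, List.map_append, List.prod_append, List.map_singleton,
      List.prod_singleton, mul_apply]
    simp only [ih, mul_sum, sum_mul]
    rw [sum_sigma']
    refine sum_bij' (fun p _ v => if v ∈ p.1 then p.2 v else if v ∈ S then N else 0)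
      (fun κ _ => ⟨{v ∈ S | κ v < N}, fun v => if κ v < N then κ v else 0⟩) ?_ ?_ ?_ ?_ ?_
    · rintro ⟨A, κ⟩ hp
      simp only [mem_sigma, mem_powerset, mem_colourings] at hp ⊢
      obtain ⟨hA, h1, h2⟩ := hp
      refine ⟨fun v hv => ?_, fun v hv => ?_⟩
      · split_ifs with h
        · exact (h1 v h).trans (Nat.lt_succ_self N)
        · exact Nat.lt_succ_self N
      · rw [if_neg fun h => hv (hA h), if_neg hv]
    · intro κ hκ
      simp only [mem_sigma, mem_powerset, mem_colourings] at hκ ⊢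
      refine ⟨filter_subset _ _, fun v hv => ?_, fun v hv => ?_⟩
      · rw [mem_filter] at hv
        rw [if_pos hv.2]; exact hv.2
      · rw [mem_filter] at hv
        by_cases hvS : v ∈ S
        · rw [if_neg fun h => hv ⟨hvS, h⟩]
        · simp [hκ.2 v hvS]
    · rintro ⟨A, κ⟩ hp
      simp only [mem_sigma, mem_powerset, mem_colourings] at hp
      obtain ⟨hA, h1, h2⟩ := hp
      rw [Sigma.mk.injEq]
      refine ⟨?_, heq_of_eq ?_⟩
      · ext v
        rw [mem_filter]
        by_cases h : v ∈ A
        · simp [h, hA h, h1 v h]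
        · by_cases h' : v ∈ S <;> simp [h, h']
      · ext v
        by_cases h : v ∈ A
        · simp [h, h1 v h]
        · by_cases h' : v ∈ S <;> simp [h, h', h2 v h]
    · intro κ hκ
      simp only [mem_colourings] at hκ
      ext v
      by_cases hv : v ∈ S
      · have := hκ.1 v hv
        by_cases h : κ v < N
        · simp [hv, h]
        · simp [hv, h]; omega
      · simp [hv, hκ.2 v hv]
    · rintro ⟨A, κ⟩ hp
      simp only [mem_sigma, mem_powerset, mem_colourings] at hp
      obtain ⟨hA, h1, h2⟩ := hp
      dsimp only
      set κ' : Fin n → ℕ := fun v => if v ∈ A then κ v else if v ∈ S then N else 0 with hκ'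
      have e1 : ∀ v ∈ A, κ' v = κ v := fun v hv => if_pos hv
      have e2 : ∀ v ∈ S \ A, κ' v = N := fun v hv => by
        rw [mem_sdiff] at hv
        rw [hκ']; simp [hv]
      rw [ascIn_extend hA (fun v hv => ⟨e1 v hv, h1 v hv⟩) e2, prod_range_succ]
      have e3 : {v ∈ S | κ' v = N} = S \ A := by
        ext v
        rw [mem_filter, mem_sdiff]
        refine and_congr_right fun hv => ⟨fun h hvA => ?_, fun h => e2 v (mem_sdiff.2 ⟨hv, h⟩)⟩
        have := h1 v hvA
        rw [e1 v hvA] at h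
        omega
      have e4 : ∏ c ∈ range N, f c {v ∈ S | κ' v = c} = ∏ c ∈ range N, f c {v ∈ A | κ v = c} := by
        refine prod_congr rfl fun c hc => ?_
        congr 1
        ext v
        rw [mem_filter, mem_filter]
        rw [mem_range] at hc
        by_cases hvA : v ∈ A
        · simp [hvA, hA hvA, e1 v hvA]
        · simp only [hvA, false_and, iff_false, not_and]
          intro hv
          rw [e2 v (mem_sdiff.2 ⟨hv, hvA⟩)]
          omega
      rw [e3, e4, pow_add]
      ring

end SetAlg

lemma ascNum_eq_ascIn {N : ℕ} (κ : Fin n → Fin N) :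
    ascNum G κ = ascIn G univ fun v => (κ v : ℕ) := by
  rw [ascNum, ascIn, ← sum_product', Nat.card_eq_fintype_card, Fintype.card_subtype, card_filter]
  rfl

lemma coeff_cqf (N : ℕ) (α : Fin N →₀ ℕ) :
    MvPolynomial.coeff α (cqf G N) =
      ((List.range N).map fun c =>
        SetAlg.stab G (if h : c < N then α ⟨c, h⟩ else 0)).prod univ := by
  have h1 : cqf G N = ∑ κ : Fin n → Fin N with ∀ i j, G.Adj i j → κ i ≠ κ j,
      MvPolynomial.C (X ^ ascNum G κ) * ∏ i, MvPolynomial.X (κ i) := by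
    exact (finsum_mem_eq_finite_toFinset_sum _ (Set.toFinite
      {κ : Fin n → Fin N | ∀ i j, G.Adj i j → κ i ≠ κ j})).trans
      (sum_congr (by ext; simp) fun _ _ => rfl)
  rw [h1, MvPolynomial.coeff_sum, SetAlg.prod_map_range_apply, sum_filter]
  refine sum_bij (fun κ _ v => (κ v : ℕ)) ?_ ?_ ?_ ?_
  · intro κ _
    simp [SetAlg.mem_colourings]
  · intro κ _ κ' _ h
    ext v
    exact congrFun h v
  · intro κ hκ
    rw [SetAlg.mem_colourings] at hκ
    exact ⟨fun v => ⟨κ v, hκ.1 v (mem_univ v)⟩, mem_univ _, rfl⟩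
  · intro κ _
    have hst : ∀ c : Fin N, SetAlg.stab G (if h : (c : ℕ) < N then α ⟨c, h⟩ else 0)
        {v ∈ univ | (κ v : ℕ) = c} = if #{v | κ v = c} = α c ∧ IsStable G {v | κ v = c}
          then 1 else 0 := by
      intro c
      simp [SetAlg.stab, SetAlg.grade_apply, stableInd, Fin.ext_iff, ite_and]
    have hprop : (∀ i j, G.Adj i j → κ i ≠ κ j) ↔ ∀ c, IsStable G {v | κ v = c} := by
      refine ⟨fun h c a ha b hb hab => ?_, fun h i j hij he => ?_⟩
      · simp only [mem_filter, mem_univ, true_and] at ha hb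
        exact h a b hab (ha.trans hb.symm)
      · exact h (κ j) i (by simp [he]) j (by simp) hij
    rw [ascNum_eq_ascIn, MvPolynomial.coeff_C_mul, coeff_prod_X,
      ← Fin.prod_univ_eq_prod_range (fun c => SetAlg.stab G (if h : c < N then α ⟨c, h⟩ else 0)
        {v ∈ univ | (κ v : ℕ) = c}) N, prod_congr rfl fun c _ => hst c]
    by_cases h1 : ∀ c, IsStable G {v | κ v = c}
    · rw [if_pos (hprop.2 h1)]
      congr 1
      simp only [h1, and_true, prod_ite_zero, mem_univ, forall_const, prod_const_one]
      congr!
    · rw [if_neg fun h => h1 (hprop.1 h)]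
      push Not at h1
      obtain ⟨c, hc⟩ := h1
      rw [prod_eq_zero (mem_univ c) (if_neg fun h => hc h.2), mul_zero]

end ColouringWords

section CoefficientExtraction

open Finset Polynomial
open scoped Classical

variable {n : ℕ} {G : SimpleGraph (Fin n)}

lemma neg_one_pow_mul_neg_one_pow {R : Type*} [Ring R] (i j : ℕ) :
    (-1 : R) ^ (i + j + 1) * (-1) ^ i = (-1) ^ (j + 1) := by
  rw [← pow_add, show i + j + 1 + i = j + 1 + 2 * i by ring, pow_add, pow_mul, neg_one_sq,
    one_pow, mul_one]

namespace SetAlg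

/-- The `m`-th elementary generator of `SetAlg G × ℤ[q][y_1, …, y_n]`. -/
noncomputable def stabPair (G : SimpleGraph (Fin n)) (m : ℕ) :
    SetAlg G × MvPolynomial (Fin n) ℤ[X] :=
  (stab G m, MvPolynomial.esymm (Fin n) ℤ[X] m)

/-- The `m`-th signed power sum in `SetAlg G × ℤ[q][y_1, …, y_n]`. -/
noncomputable def pwPair (G : SimpleGraph (Fin n)) (m : ℕ) :
    SetAlg G × MvPolynomial (Fin n) ℤ[X] :=
  (pw G m, (-1) ^ (m + 1) * MvPolynomial.psum (Fin n) ℤ[X] m)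

lemma pwPair_mem_closure (hG : IsNUIG G) {m : ℕ} (hm : m ≠ 0) :
    pwPair G m ∈ Subring.closure (Set.range (stabPair G)) := by
  refine mem_closure_of_newton ?_ (fun m => ?_) hm
  · exact Prod.ext stab_zero (MvPolynomial.esymm_zero (Fin n) ℤ[X])
  · refine Prod.ext ?_ ?_
    · rw [Prod.fst_sum]
      exact newton hG m
    · rw [Prod.snd_sum]
      refine (MvPolynomial.mul_esymm_eq_sum (Fin n) ℤ[X] m).trans ?_
      rw [mul_sum]
      refine sum_congr rfl fun a ha => ?_
      rw [mem_filter, HasAntidiagonal.mem_antidiagonal] at ha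
      simp only [stabPair, pwPair, Prod.snd_mul]
      rw [← ha.1, ← neg_one_pow_mul_neg_one_pow a.1 a.2]
      ring

lemma eq_sum_coeff_of_mem_closure {c : n.Partition → ℤ[X]}
    (hc : ∀ N : ℕ, cqf G N = ∑ μ : n.Partition,
      MvPolynomial.C (c μ) * MvPolynomial.esymmPart (Fin N) ℤ[X] μ)
    {x : SetAlg G × MvPolynomial (Fin n) ℤ[X]}
    (hx : x ∈ Subring.closure (Set.range (stabPair G))) :
    x.1 univ = ∑ μ, c μ * MvPolynomial.coeff (partExp μ) x.2 := by
  rw [Subring.mem_closure_iff] at hx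
  induction hx using AddSubgroup.closure_induction with
  | mem x hx =>
    obtain ⟨l, hl, rfl⟩ := Submonoid.exists_list_of_mem_closure hx
    obtain ⟨w, rfl⟩ : l ∈ Set.range (List.map (stabPair G)) := by
      rwa [Set.range_list_map]
    set α : Fin w.length →₀ ℕ := Finsupp.equivFunOnFinite.symm fun i => w.get i with hα
    have hw : w.map (stab G) = (List.range w.length).map fun i =>
        stab G (if h : i < w.length then α ⟨i, h⟩ else 0) := by
      refine List.ext_getElem (by simp) fun i h1 h2 => ?_
      rw [List.length_map] at h1
      simp [hα, h1]
    have h1 : ((w.map (stabPair G)).prod).1 = (w.map (stab G)).prod := by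
      refine (map_list_prod (RingHom.fst _ _) _).trans ?_
      rw [List.map_map]; rfl
    have h2 : ((w.map (stabPair G)).prod).2 = ∏ i, MvPolynomial.esymm (Fin n) ℤ[X] (α i) := by
      refine (map_list_prod (RingHom.snd _ _) _).trans ?_
      rw [List.map_map]
      exact (Fin.prod_univ_fun_getElem w _).symm
    rw [h1, h2, hw]
    refine (coeff_cqf _ α).symm.trans ?_
    rw [hc, MvPolynomial.coeff_sum]
    refine sum_congr rfl fun μ _ => ?_
    rw [MvPolynomial.coeff_C_mul, MvPolynomial.esymmPart,
      ← prod_partExp (f := MvPolynomial.esymm _ ℤ[X]) (MvPolynomial.esymm_zero _ _),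
      coeff_prod_esymm_comm]
  | zero => simp
  | add x y _ _ hx hy => simp [hx, hy, mul_add, sum_add_distrib]
  | neg x _ hx => simp [hx]

lemma coeff_psum_mul_psum_sub [NeZero n] {a b : ℕ} (hb : 0 < b) (hab : b < a)
    (hn : a + b = n) (μ : n.Partition) :
    MvPolynomial.coeff (partExp μ) (MvPolynomial.psum (Fin n) ℤ[X] a *
      MvPolynomial.psum (Fin n) ℤ[X] b - MvPolynomial.psum (Fin n) ℤ[X] n) =
      if μ.parts = {a, b} then 1 else 0 := by
  have h1 : ((1 : Fin n) : ℕ) = 1 := by rw [Fin.val_one', Nat.mod_eq_of_lt (by omega)]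
  have h01 : (0 : Fin n) ≠ 1 := by rw [Ne, Fin.ext_iff, h1]; simp
  have hmul : MvPolynomial.psum (Fin n) ℤ[X] a * MvPolynomial.psum (Fin n) ℤ[X] b =
      ∑ i, ∑ j, MvPolynomial.monomial (Finsupp.single i a + Finsupp.single j b) 1 := by
    simp [MvPolynomial.psum, sum_mul_sum, MvPolynomial.X_pow_eq_monomial]
  have hdiag : MvPolynomial.psum (Fin n) ℤ[X] n = ∑ i, ∑ j, if i = j then
      MvPolynomial.monomial (Finsupp.single i a + Finsupp.single j b) 1 else 0 := by
    simp [MvPolynomial.psum, MvPolynomial.X_pow_eq_monomial, ← Finsupp.single_add, hn]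
  rw [hmul, hdiag, ← sum_sub_distrib, MvPolynomial.coeff_sum, sum_eq_single 0, ← sum_sub_distrib,
    MvPolynomial.coeff_sum, sum_eq_single 1]
  · rw [if_neg h01, sub_zero, MvPolynomial.coeff_monomial]
    simp [single_add_single_eq_partExp hb hab h01]
  · intro j _ hj
    split_ifs with h
    · simp
    · rw [sub_zero, MvPolynomial.coeff_monomial, if_neg]
      exact fun he => hj ((single_add_single_eq_partExp hb hab h).1 he).2.1
  · simp
  · intro i _ hi
    rw [← sum_sub_distrib, MvPolynomial.coeff_sum]
    refine sum_eq_zero fun j _ => ?_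
    split_ifs with h
    · simp
    · rw [sub_zero, MvPolynomial.coeff_monomial, if_neg]
      exact fun he => hi ((single_add_single_eq_partExp hb hab h).1 he).1
  · simp

lemma coeff_eq_of_parts (hG : IsNUIG G) {c : n.Partition → ℤ[X]}
    (hc : ∀ N : ℕ, cqf G N = ∑ μ : n.Partition,
      MvPolynomial.C (c μ) * MvPolynomial.esymmPart (Fin N) ℤ[X] μ)
    {a b : ℕ} (hb : 0 < b) (hab : b < a) (hn : a + b = n) {μ : n.Partition}
    (hμ : μ.parts = {a, b}) :
    c μ = qint a * qint b * (dec G a * dec G b) univ - qint n * indS G univ := by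
  have : NeZero n := ⟨by omega⟩
  have h := eq_sum_coeff_of_mem_closure hc
    (add_mem (mul_mem (pwPair_mem_closure hG (hb.trans hab).ne') (pwPair_mem_closure hG hb.ne'))
      (pwPair_mem_closure hG (NeZero.ne n)))
  have h2 : (pwPair G a * pwPair G b + pwPair G n).2 = MvPolynomial.C ((-1) ^ n) *
      (MvPolynomial.psum (Fin n) ℤ[X] a * MvPolynomial.psum (Fin n) ℤ[X] b -
        MvPolynomial.psum (Fin n) ℤ[X] n) := by
    simp only [pwPair, Prod.snd_add, Prod.snd_mul, map_pow, map_neg, map_one]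
    rw [pow_succ _ n, show (-1 : MvPolynomial (Fin n) ℤ[X]) ^ n = (-1) ^ a * (-1) ^ b by
      rw [← pow_add, hn]]
    ring
  have h1 : (pwPair G a * pwPair G b + pwPair G n).1 univ = (-1) ^ n *
      (qint a * qint b * (dec G a * dec G b) univ - qint n * indS G univ) := by
    simp only [pwPair, Prod.fst_add, Prod.fst_mul, add_apply]
    rw [pw, pw, smul_mul_smul_comm, smul_apply, pw_apply, if_pos (card_fin n), signedS, card_fin]
    rw [pow_succ _ n, show (-1 : ℤ[X]) ^ n = (-1) ^ a * (-1) ^ b by rw [← pow_add, hn]]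
    ring
  rw [h1, h2] at h
  have hs : ∑ ν, c ν * MvPolynomial.coeff (partExp ν) (MvPolynomial.C ((-1) ^ n) *
      (MvPolynomial.psum (Fin n) ℤ[X] a * MvPolynomial.psum (Fin n) ℤ[X] b -
        MvPolynomial.psum (Fin n) ℤ[X] n)) = (-1) ^ n * c μ := by
    rw [sum_eq_single μ]
    · rw [MvPolynomial.coeff_C_mul, coeff_psum_mul_psum_sub hb hab hn, if_pos hμ]
      ring
    · intro ν _ hν
      rw [MvPolynomial.coeff_C_mul, coeff_psum_mul_psum_sub hb hab hn, if_neg, mul_zero, mul_zero]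
      exact fun h => hν (Nat.Partition.ext (h.trans hμ.symm))
    · simp
  rw [hs] at h
  exact (mul_left_cancel₀ (pow_ne_zero n (neg_ne_zero.2 one_ne_zero)) h).symm

end SetAlg

end CoefficientExtraction

section ReadingWords

open Finset Polynomial
open scoped Classical

variable {n : ℕ} {G : SimpleGraph (Fin n)}

/-- The number of `G`-inversions of a word, defined by recursion on the word. -/
noncomputable def invL (G : SimpleGraph (Fin n)) : List (Fin n) → ℕ
  | [] => 0
  | x :: l => (l.map fun y => if y < x ∧ G.Adj y x then 1 else 0).sum + invL G l

lemma invG_eq_invL (l : List (Fin n)) : invG G l = invL G l := by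
  have h : ∀ l : List (Fin n), invG G l = ∑ i : Fin l.length, ∑ j : Fin l.length,
      if i < j ∧ l.get j < l.get i ∧ G.Adj (l.get j) (l.get i) then 1 else 0 := by
    intro l
    rw [invG, ← sum_product', Nat.card_eq_fintype_card, Fintype.card_subtype, card_filter]
    rfl
  rw [h]
  induction l with
  | nil => simp [invL]
  | cons x l ih =>
    rw [invL, ← ih, ← Fin.sum_univ_fun_getElem]
    change ∑ i : Fin (l.length + 1), ∑ j : Fin (l.length + 1), _ = _
    rw [Fin.sum_univ_succ, Fin.sum_univ_succ]
    congr 1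
    · simp
    · refine sum_congr rfl fun i _ => ?_
      rw [Fin.sum_univ_succ]
      simp

lemma invL_append (l₁ l₂ : List (Fin n)) :
    invL G (l₁ ++ l₂) = invL G l₁ + invL G l₂ +
      (l₁.map fun x => (l₂.map fun y => if y < x ∧ G.Adj y x then 1 else 0).sum).sum := by
  induction l₁ with
  | nil => simp [invL]
  | cons x l₁ ih =>
    rw [List.cons_append, invL, ih, List.map_append, List.sum_append, invL, List.map_cons,
      List.sum_cons]
    ring

lemma invL_append_of_nodup {l₁ l₂ : List (Fin n)} (h₁ : l₁.Nodup) (h₂ : l₂.Nodup) :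
    invL G (l₁ ++ l₂) = invL G l₁ + invL G l₂ + ascBetween G l₂.toFinset l₁.toFinset := by
  rw [invL_append, ascBetween, sum_comm, List.sum_toFinset _ h₁]
  simp only [List.sum_toFinset _ h₂]

lemma invL_insert_of_lt {w : Fin n} {l₁ l₂ : List (Fin n)} (h₁ : ∀ x ∈ l₁, x < w)
    (h₂ : ∀ x ∈ l₂, x < w) :
    invL G (l₁ ++ w :: l₂) =
      invL G (l₁ ++ l₂) + (l₂.map fun y => if G.Adj y w then 1 else 0).sum := by
  induction l₁ with
  | nil =>
    rw [List.nil_append, List.nil_append, invL, add_comm]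
    congr 2
    exact List.map_congr_left fun y hy => by simp [h₂ y hy]
  | cons x l₁ ih =>
    rw [List.cons_append, List.cons_append, invL, invL,
      ih fun y hy => h₁ y (List.mem_cons_of_mem x hy)]
    simp [(h₁ x List.mem_cons_self).not_gt]
    ring

/-- Every letter of the word is adjacent to an earlier letter or to an element of `P`. -/
def Reach (G : SimpleGraph (Fin n)) : Set (Fin n) → List (Fin n) → Prop
  | _, [] => True
  | P, x :: l => (∃ u ∈ P, G.Adj u x) ∧ Reach G (insert x P) l

lemma reach_iff {P : Set (Fin n)} {l : List (Fin n)} :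
    Reach G P l ↔ ∀ t (ht : t < l.length), ∃ u, (u ∈ P ∨ u ∈ l.take t) ∧ G.Adj u l[t] := by
  induction l generalizing P with
  | nil => simp [Reach]
  | cons x l ih =>
    rw [Reach, ih]
    constructor
    · rintro ⟨⟨u, hu, hux⟩, h⟩ t ht
      cases t with
      | zero => exact ⟨u, Or.inl hu, hux⟩
      | succ t =>
        obtain ⟨v, hv, hvt⟩ := h t (by simpa using ht)
        refine ⟨v, ?_, hvt⟩
        rw [List.take_succ_cons, List.mem_cons]
        rw [Set.mem_insert_iff] at hv
        tauto
    · intro h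
      constructor
      · obtain ⟨u, hu, hux⟩ := h 0 (by simp)
        exact ⟨u, by simpa using hu, hux⟩
      · intro t ht
        obtain ⟨v, hv, hvt⟩ := h (t + 1) (by simpa using ht)
        refine ⟨v, ?_, hvt⟩
        rw [List.take_succ_cons, List.mem_cons] at hv
        rw [Set.mem_insert_iff]
        tauto

lemma Reach.mono {P Q : Set (Fin n)} {l : List (Fin n)} (h : Reach G P l) (hPQ : P ⊆ Q) :
    Reach G Q l := by
  rw [reach_iff] at h ⊢
  intro t ht
  obtain ⟨u, hu, hut⟩ := h t ht
  exact ⟨u, hu.imp_left fun h => hPQ h, hut⟩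

lemma reach_append {P : Set (Fin n)} {l₁ l₂ : List (Fin n)} :
    Reach G P (l₁ ++ l₂) ↔ Reach G P l₁ ∧ Reach G (P ∪ {x | x ∈ l₁}) l₂ := by
  induction l₁ generalizing P with
  | nil => simp [Reach]
  | cons x l₁ ih =>
    have h : insert x P ∪ {y | y ∈ l₁} = P ∪ {y | y ∈ x :: l₁} := by
      ext y; simp only [Set.mem_union, Set.mem_insert_iff, Set.mem_ofPred_eq, List.mem_cons]; tauto
    rw [List.cons_append, Reach, Reach, ih, h, and_assoc]

lemma IsNUIG.adj_of_adj_of_lt (hG : IsNUIG G) {u v w : Fin n} (hu : u < w) (hv : v < w)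
    (huw : G.Adj u w) (hvw : G.Adj v w) (huv : u ≠ v) : G.Adj u v := by
  rcases lt_or_gt_of_ne huv with h | h
  · exact (hG u v w h hv huw).1
  · exact (hG v u w h hu hvw).1.symm

lemma IsNUIG.reach_of_insert (hG : IsNUIG G) {w u : Fin n} {Q : Set (Fin n)}
    {l : List (Fin n)} (hu : u ∈ Q) (huw : G.Adj u w) (hlt : u < w) (hl : ∀ x ∈ l, x < w)
    (hul : u ∉ l) (h : Reach G (insert w Q) l) : Reach G Q l := by
  induction l generalizing Q with
  | nil => trivial
  | cons x l ih =>
    obtain ⟨⟨v, hv, hvx⟩, h2⟩ := h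
    rw [List.mem_cons, not_or] at hul
    refine ⟨?_, ih (Set.mem_insert_of_mem x hu) (fun y hy => hl y (List.mem_cons_of_mem x hy))
      hul.2 (by rwa [Set.insert_comm])⟩
    rcases hv with rfl | hv
    · exact ⟨u, hu, hG.adj_of_adj_of_lt hlt (hl x List.mem_cons_self) huw hvx.symm hul.1⟩
    · exact ⟨v, hv, hvx⟩

/-- The words which are reading lists of decreasing subtrees of a natural unit interval graph. -/
def IsGoodWord (G : SimpleGraph (Fin n)) : List (Fin n) → Prop
  | [] => False
  | h :: l => (h :: l).Nodup ∧ (∀ x ∈ l, h < x) ∧ Reach G {h} l ∧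
      List.IsChain (fun a b => b < a → G.Adj a b) (h :: l)

lemma IsGoodWord.nodup {l : List (Fin n)} (h : IsGoodWord G l) : l.Nodup := by
  cases l with
  | nil => exact List.nodup_nil
  | cons x l => exact h.1

lemma IsGoodWord.ne_nil {l : List (Fin n)} (h : IsGoodWord G l) : l ≠ [] := by
  rintro rfl
  exact h

lemma IsNUIG.isGoodWord_insert_iff (hG : IsNUIG G) {w : Fin n} {l₁ l₂ : List (Fin n)}
    (h₁ : ∀ x ∈ l₁, x < w) (h₂ : ∀ x ∈ l₂, x < w) (hne : l₁ ++ l₂ ≠ []) :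
    IsGoodWord G (l₁ ++ w :: l₂) ↔ IsGoodWord G (l₁ ++ l₂) ∧ (∃ u ∈ l₁, G.Adj u w) ∧
      ∀ y ∈ l₂.head?, G.Adj y w := by
  cases l₁ with
  | nil =>
    obtain ⟨y, l, rfl⟩ := List.exists_cons_of_ne_nil hne
    constructor
    · rintro ⟨-, h, -⟩
      exact ((h y List.mem_cons_self).not_gt (h₂ y List.mem_cons_self)).elim
    · rintro ⟨-, ⟨u, hu, -⟩, -⟩
      exact (List.not_mem_nil hu).elim
  | cons h t =>
    have hnd : (h :: (t ++ w :: l₂)).Nodup ↔ (h :: (t ++ l₂)).Nodup := by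
      have hp : (h :: (t ++ w :: l₂)).Perm (w :: (h :: (t ++ l₂))) :=
        (List.perm_middle (l₁ := h :: t))
      rw [hp.nodup_iff, List.nodup_cons, and_iff_right]
      intro hw
      rw [← List.cons_append, List.mem_append] at hw
      rcases hw with hw | hw
      · exact (h₁ w hw).false
      · exact (h₂ w hw).false
    have hhw := h₁ h List.mem_cons_self
    have hset : ({h} ∪ {x | x ∈ t} : Set (Fin n)) = {x | x ∈ h :: t} := by
      ext; simp
    simp only [List.cons_append, IsGoodWord, hnd, reach_append, hset, Reach]
    rw [← List.cons_append, ← List.cons_append, List.isChain_append, List.isChain_append]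
    constructor
    · rintro ⟨hn, hlt, ⟨hr1, ⟨u, hu, huw⟩, hr2⟩, hc1, hc2, hc3⟩
      rw [List.isChain_cons] at hc2
      have hd := List.disjoint_of_nodup_append (l₁ := h :: t) (l₂ := l₂) hn
      have hhead : ∀ y ∈ l₂.head?, G.Adj y w := fun y hy =>
        (hc2.1 y hy (h₂ y (List.mem_of_mem_head? hy))).symm
      refine ⟨⟨hn, fun x hx => hlt x ?_, ⟨hr1, ?_⟩, hc1, hc2.2, ?_⟩, ⟨u, hu, huw⟩, hhead⟩
      · rw [List.mem_append] at hx ⊢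
        exact hx.imp_right (List.mem_cons_of_mem w)
      · exact hG.reach_of_insert hu huw (h₁ u hu) h₂ (hd hu) hr2
      · intro x hx y hy hyx
        exact (hG y x w hyx (h₁ x (List.mem_of_mem_getLast? hx)) (hhead y hy)).1.symm
    · rintro ⟨⟨hn, hlt, ⟨hr1, hr2⟩, hc1, hc2, hc3⟩, ⟨u, hu, huw⟩, hhead⟩
      refine ⟨hn, fun x hx => ?_, ⟨hr1, ⟨u, hu, huw⟩, hr2.mono (Set.subset_insert w _)⟩, hc1,
        ?_, ?_⟩
      · rw [List.mem_append, List.mem_cons] at hx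
        rcases hx with hx | rfl | hx
        · exact hlt x (List.mem_append_left _ hx)
        · exact hhw
        · exact hlt x (List.mem_append_right _ hx)
      · rw [List.isChain_cons]
        exact ⟨fun y hy _ => (hhead y hy).symm, hc2⟩
      · intro x hx y hy hyx
        rw [List.head?_cons, Option.mem_some_iff] at hy
        subst hy
        exact absurd hyx (h₁ x (List.mem_of_mem_getLast? hx)).not_gt

lemma sum_splits_of_true (d : Fin n → Prop) (l : List (Fin n)) :
    ∑ i ∈ range (l.length + 1), (if ∀ y ∈ (l.drop i).head?, d y then
      X ^ ((l.drop i).map fun y => if d y then 1 else 0).sum else (0 : ℤ[X])) =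
      qint ((l.map fun y => if d y then 1 else 0).sum + 1) := by
  induction l with
  | nil => simp [qint_one]
  | cons x l ih =>
    rw [List.length_cons, sum_range_succ']
    simp only [List.drop_succ_cons]
    rw [ih]
    by_cases hx : d x
    · simp [hx, add_comm 1, qint_succ]
    · simp [hx]

lemma sum_splits_eq_qint (d : Fin n → Prop) (l : List (Fin n)) :
    ∑ i ∈ range (l.length + 1), (if (∃ u ∈ l.take i, d u) ∧ ∀ y ∈ (l.drop i).head?, d y then
      X ^ ((l.drop i).map fun y => if d y then 1 else 0).sum else (0 : ℤ[X])) =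
      qint (l.map fun y => if d y then 1 else 0).sum := by
  induction l with
  | nil => simp [qint_zero]
  | cons x l ih =>
    rw [List.length_cons, sum_range_succ']
    by_cases hx : d x
    · have := sum_splits_of_true d l
      simpa [hx, add_comm 1] using this
    · simpa [hx] using ih

/-- The words using each letter of `S` exactly once. -/
noncomputable def wordsOn (S : Finset (Fin n)) : Finset (List (Fin n)) := S.val.lists.toFinset

lemma mem_wordsOn {S : Finset (Fin n)} {l : List (Fin n)} :
    l ∈ wordsOn S ↔ l.Nodup ∧ l.toFinset = S := by
  rw [wordsOn, Multiset.mem_toFinset, Multiset.mem_lists_iff]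
  constructor
  · intro h
    have hnd : l.Nodup := Multiset.coe_nodup.1 (h.subst S.nodup)
    exact ⟨hnd, Finset.val_injective (by rw [List.toFinset_val, hnd.dedup]; exact h.symm)⟩
  · rintro ⟨h, rfl⟩
    rw [List.toFinset_val, h.dedup]
    rfl

/-- The good words with set of letters `S`. -/
noncomputable def goodWords (G : SimpleGraph (Fin n)) (S : Finset (Fin n)) :
    Finset (List (Fin n)) :=
  {l ∈ wordsOn S | IsGoodWord G l}

lemma mem_goodWords {S : Finset (Fin n)} {l : List (Fin n)} :
    l ∈ goodWords G S ↔ IsGoodWord G l ∧ l.toFinset = S := by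
  rw [goodWords, mem_filter, mem_wordsOn, and_comm]
  exact and_congr_right fun hl => and_iff_right hl.nodup

lemma IsNUIG.indS_eq_sum_goodWords (hG : IsNUIG G) {S : Finset (Fin n)} (hS : S.Nonempty) :
    indS G S = ∑ l ∈ goodWords G S, X ^ invL G l := by
  induction S using Finset.induction_on_max with
  | empty => simp at hS
  | insert w S hw ih =>
    rcases S.eq_empty_or_nonempty with rfl | hne
    · have h : goodWords G (insert w ∅) = {[w]} := by
        ext l
        rw [mem_goodWords, mem_singleton]
        constructor
        · rintro ⟨h1, h2⟩
          have h3 : (l : Multiset (Fin n)) = {w} := by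
            have := congrArg Finset.val h2
            rwa [List.toFinset_val, h1.nodup.dedup] at this
          exact Multiset.coe_eq_singleton.1 h3
        · rintro rfl
          simp [IsGoodWord, Reach]
      rw [h]
      simp [invL]
    · have hwS : w ∉ S := fun h => (hw w h).false
      rw [indS_insert_of_lt hne hw, ih hne, sum_mul]
      have hterm : ∀ l ∈ goodWords G S, X ^ invL G l * qint (degIn G w S) =
          ∑ i ∈ range (l.length + 1) with (∃ u ∈ l.take i, G.Adj u w) ∧
            ∀ y ∈ (l.drop i).head?, G.Adj y w, X ^ invL G (l.take i ++ w :: l.drop i) := by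
        intro l hl
        rw [mem_goodWords] at hl
        have hlw : ∀ x ∈ l, x < w := fun x hx => hw x (hl.2 ▸ List.mem_toFinset.2 hx)
        rw [degIn, ← hl.2, List.sum_toFinset _ hl.1.nodup,
          ← sum_splits_eq_qint (fun y => G.Adj y w), mul_sum, sum_filter]
        refine sum_congr rfl fun i _ => ?_
        rw [mul_ite, mul_zero, ← pow_add, invL_insert_of_lt
          (fun x hx => hlw x (List.mem_of_mem_take hx))
          (fun x hx => hlw x (List.mem_of_mem_drop hx)), List.take_append_drop]
      rw [sum_congr rfl hterm, sum_sigma']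
      refine sum_bij (fun p _ => p.1.take p.2 ++ w :: p.1.drop p.2) ?_ ?_ ?_ fun _ _ => rfl
      · rintro ⟨l, i⟩ hp
        simp only [mem_sigma, mem_goodWords, mem_filter] at hp
        obtain ⟨⟨hl, rfl⟩, -, h1, h2⟩ := hp
        simp only [List.mem_toFinset] at hw
        rw [mem_goodWords, hG.isGoodWord_insert_iff (fun x hx => hw x (List.mem_of_mem_take hx))
          (fun x hx => hw x (List.mem_of_mem_drop hx))
          (by rw [List.take_append_drop]; exact hl.ne_nil), List.take_append_drop]
        refine ⟨⟨hl, h1, h2⟩, ?_⟩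
        rw [List.toFinset_append, List.toFinset_cons, union_insert, ← List.toFinset_append,
          List.take_append_drop]
      · rintro ⟨l, i⟩ hp ⟨l', i'⟩ hp' h
        simp only [mem_sigma, mem_goodWords, mem_filter, mem_range] at hp hp'
        have hwl : w ∉ l := fun h => hwS (hp.1.2 ▸ List.mem_toFinset.2 h)
        dsimp only at hp hp' h
        obtain ⟨h1, -, h2⟩ := (List.append_cons_inj_of_notMem
          (fun h => hwl (List.mem_of_mem_take h)) (fun h => hwl (List.mem_of_mem_drop h))).1 h
        have hll : l = l' := by
          rw [← List.take_append_drop i l, ← List.take_append_drop i' l', h1, h2]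
        subst hll
        have := congrArg List.length h1
        rw [List.length_take, List.length_take] at this
        have hi : i = i' := by omega
        rw [hi]
      · intro l hl
        rw [mem_goodWords] at hl
        obtain ⟨l₁, l₂, rfl⟩ := List.append_of_mem
          (List.mem_toFinset.1 (hl.2 ▸ mem_insert_self w S))
        have hnd := (List.perm_middle (a := w) (l₁ := l₁) (l₂ := l₂)).nodup_iff.1 hl.1.nodup
        rw [List.nodup_cons] at hnd
        have hset : (l₁ ++ l₂).toFinset = S := by
          have h := hl.2
          rw [List.toFinset_append, List.toFinset_cons, union_insert, ← List.toFinset_append] at h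
          rw [← erase_insert hwS, ← h, erase_insert (by simpa using hnd.1)]
        have hlt : ∀ x ∈ l₁ ++ l₂, x < w := fun x hx => hw x (hset ▸ List.mem_toFinset.2 hx)
        have hne' : l₁ ++ l₂ ≠ [] := by
          rintro h
          rw [h] at hset
          exact hne.ne_empty hset.symm
        obtain ⟨h1, h2, h3⟩ := (hG.isGoodWord_insert_iff
          (fun x hx => hlt x (List.mem_append_left _ hx))
          (fun x hx => hlt x (List.mem_append_right _ hx)) hne').1 hl.1
        refine ⟨⟨l₁ ++ l₂, l₁.length⟩, ?_, by simp⟩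
        simp only [mem_sigma, mem_goodWords, mem_filter, mem_range, List.length_append,
          List.take_left, List.drop_left]
        exact ⟨⟨h1, hset⟩, by omega, h2, h3⟩

end ReadingWords

section DecreasingTrees

open Finset Polynomial
open scoped Classical

variable {n : ℕ} {G : SimpleGraph (Fin n)}

lemma isGoodWord_iff {l : List (Fin n)} : IsGoodWord G l ↔ l.Nodup ∧ ∃ h0 : 0 < l.length,
    (∀ x ∈ l, l[0] ≤ x) ∧ (∀ t (ht : t < l.length), 0 < t → ∃ u ∈ l.take t, G.Adj u l[t]) ∧
      ∀ t (ht : t + 1 < l.length), l[t + 1] < l[t] → G.Adj l[t] l[t + 1] := by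
  cases l with
  | nil => simp [IsGoodWord]
  | cons h l =>
    have hr : Reach G {h} l ↔ ∀ t (ht : t < (h :: l).length), 0 < t →
        ∃ u ∈ (h :: l).take t, G.Adj u (h :: l)[t] := by
      rw [reach_iff]
      constructor
      · intro H t ht h0
        obtain ⟨t, rfl⟩ := Nat.exists_eq_add_of_lt h0
        obtain ⟨u, hu, hut⟩ := H (0 + t) (by simpa using ht)
        exact ⟨u, by rw [List.take_succ_cons, List.mem_cons]; exact hu, hut⟩
      · intro H t ht
        obtain ⟨u, hu, hut⟩ := H (t + 1) (by simpa using ht) t.succ_pos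
        rw [List.take_succ_cons, List.mem_cons] at hu
        exact ⟨u, hu, hut⟩
    rw [IsGoodWord, List.isChain_iff_getElem, hr]
    refine and_congr_right fun hnd => ?_
    rw [exists_prop_of_true (by simp)]
    refine and_congr_left fun _ => ?_
    simp only [List.getElem_cons_zero, List.forall_mem_cons, le_refl, true_and]
    refine forall₂_congr fun x hx => ⟨le_of_lt, fun h' => lt_of_le_of_ne h' ?_⟩
    rintro rfl
    exact (List.nodup_cons.1 hnd).1 hx

lemma IsDecTreeList.isGoodWord {l : List (Fin n)} (h : IsDecTreeList G l) : IsGoodWord G l := by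
  obtain ⟨T, ⟨hne, -, -⟩, hnd, hmem, hmin, hread⟩ := h
  have h0 : 0 < l.length := by
    obtain ⟨v, hv⟩ := hne
    exact List.length_pos_of_mem ((hmem v).2 hv)
  refine isGoodWord_iff.2 ⟨hnd, h0, fun x hx => hmin h0 x ((hmem x).1 hx), ?_, ?_⟩
  · intro t ht ht0
    obtain ⟨-, -, u, hu, hut⟩ := (hread t ht ht0).1
    exact ⟨u, hu, hut.adj_sub⟩
  · intro t ht hlt
    obtain ⟨hv, hnt, u, hu, hut⟩ := (hread (t + 1) ht t.succ_pos).1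
    rw [List.get_eq_getElem] at hv hnt hut
    rw [List.take_succ_eq_append_getElem (by omega), List.mem_append, List.mem_singleton] at hu hnt
    rcases hu with hu | rfl
    · rcases t.eq_zero_or_pos with rfl | ht0
      · simp at hu
      · exact absurd hlt ((hread t (by omega) ht0).2
          ⟨hv, fun h => hnt (Or.inl h), u, hu, hut⟩).not_gt
    · exact hut.adj_sub

/-- A subgraph in which every vertex but the root is joined to a parent of smaller position, and
which has no other edges, is a tree. -/
lemma isTree_coe_of_parent {T : G.Subgraph} {r : Fin n} (hr : r ∈ T.verts) (pos : Fin n → ℕ)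
    (par : Fin n → Fin n) (hpos : ∀ v ∈ T.verts, v ≠ r → pos (par v) < pos v)
    (hadj : ∀ x y, T.Adj x y ↔
      (y ∈ T.verts ∧ y ≠ r ∧ x = par y) ∨ (x ∈ T.verts ∧ x ≠ r ∧ y = par x)) :
    T.coe.IsTree := by
  have hpar : ∀ v ∈ T.verts, v ≠ r → T.Adj v (par v) := fun v hv hvr =>
    (hadj _ _).2 (Or.inr ⟨hv, hvr, rfl⟩)
  rw [SimpleGraph.isTree_iff_connected_and_card]
  constructor
  · rw [SimpleGraph.connected_iff_exists_forall_reachable]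
    refine ⟨⟨r, hr⟩, fun w => ?_⟩
    induction hm : pos w using Nat.strong_induction_on generalizing w with
    | _ m ih =>
      obtain ⟨w, hw⟩ := w
      by_cases hwr : w = r
      · subst hwr
        exact SimpleGraph.Reachable.refl _
      · have h := hpar w hw hwr
        refine (ih _ (hm ▸ hpos w hw hwr) ⟨par w, T.edge_vert h.symm⟩ rfl).trans ?_
        exact SimpleGraph.Adj.reachable (G := T.coe) h.symm
  · rw [← Nat.card_congr (Equiv.optionSubtypeNe (⟨r, hr⟩ : T.verts)), Finite.card_option]
    congr 1
    symm
    have hne : ∀ v : {b : T.verts // b ≠ ⟨r, hr⟩}, (v : Fin n) ≠ r := fun v h =>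
      v.2 (Subtype.ext h)
    refine Nat.card_eq_of_bijective (fun v => ⟨s(v.1,
      ⟨par v.1, T.edge_vert (hpar v.1 v.1.2 (hne v)).symm⟩), hpar v.1 v.1.2 (hne v)⟩) ⟨?_, ?_⟩
    · intro v w h
      have h := congrArg Subtype.val h
      simp only [Sym2.eq_iff, Subtype.ext_iff] at h
      rcases h with h | ⟨h1, h2⟩
      · exact Subtype.ext (Subtype.ext h.1)
      · have hv := hpos v.1 v.1.2 (hne v)
        have hw := hpos w.1 w.1.2 (hne w)
        rw [h2] at hv
        rw [← h1] at hw
        omega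
    · rintro ⟨e, he⟩
      induction e using Sym2.ind with
      | _ x y =>
        rw [SimpleGraph.mem_edgeSet, SimpleGraph.Subgraph.coe_adj, hadj] at he
        rcases he with ⟨h1, h2, h3⟩ | ⟨h1, h2, h3⟩
        · refine ⟨⟨y, fun h => h2 (congrArg Subtype.val h)⟩, Subtype.ext ?_⟩
          rw [Sym2.eq_iff]
          exact Or.inr ⟨rfl, Subtype.ext h3.symm⟩
        · refine ⟨⟨x, fun h => h2 (congrArg Subtype.val h)⟩, Subtype.ext ?_⟩
          rw [Sym2.eq_iff]
          exact Or.inl ⟨rfl, Subtype.ext h3.symm⟩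

/-- Every letter `x` but the first has a parent `p`: the last earlier larger letter if there is
one, and the largest earlier letter otherwise. -/
lemma IsNUIG.exists_parent (hG : IsNUIG G) {l : List (Fin n)} (hl : IsGoodWord G l)
    (h0 : 0 < l.length) {x : Fin n} (hx : x ∈ l) (hxr : x ≠ l[0]) :
    ∃ p ∈ l, l.idxOf p < l.idxOf x ∧ G.Adj p x ∧
      ((x < p ∧ ∀ z ∈ l, l.idxOf p < l.idxOf z → l.idxOf z < l.idxOf x → z < x) ∨
        (p < x ∧ ∀ z ∈ l, l.idxOf z < l.idxOf x → z ≤ p)) := by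
  obtain ⟨hnd, -, -, hreach, hchain⟩ := isGoodWord_iff.1 hl
  have hlt : ∀ y ∈ l, l.idxOf y < l.length := fun y hy => List.idxOf_lt_length_iff.2 hy
  have hget : ∀ y (hy : y ∈ l), l[l.idxOf y]'(hlt y hy) = y := fun y hy => List.getElem_idxOf _
  by_cases hA : ∃ z ∈ l, l.idxOf z < l.idxOf x ∧ x < z
  · obtain ⟨p, hp, hpmax⟩ := exists_max_image
      {z ∈ l.toFinset | l.idxOf z < l.idxOf x ∧ x < z} l.idxOf (by
        obtain ⟨z, hz, h⟩ := hA
        exact ⟨z, by simpa using ⟨hz, h⟩⟩)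
    simp only [mem_filter, List.mem_toFinset] at hp hpmax
    obtain ⟨hpl, hpx, hxp⟩ := hp
    have hz : ∀ z ∈ l, l.idxOf p < l.idxOf z → l.idxOf z < l.idxOf x → z < x := by
      intro z hz h1 h2
      by_contra h3
      have hzx : z ≠ x := by rintro rfl; exact h2.false
      exact h1.not_ge (hpmax z ⟨hz, h2, lt_of_le_of_ne (not_lt.1 h3) hzx.symm⟩)
    refine ⟨p, hpl, hpx, ?_, Or.inl ⟨hxp, hz⟩⟩
    have hy : l.idxOf p + 1 < l.length := lt_of_le_of_lt hpx (hlt x hx)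
    have hc := hchain _ hy
    rw [hget p hpl] at hc
    have hyi : l.idxOf l[l.idxOf p + 1] = l.idxOf p + 1 := hnd.idxOf_getElem _ _
    have hyl : l[l.idxOf p + 1] ∈ l := List.getElem_mem _
    generalize l[l.idxOf p + 1] = y at *
    by_cases hyx : y = x
    · subst hyx
      exact hc hxp
    · have h1 : l.idxOf y ≠ l.idxOf x := fun h => hyx ((List.idxOf_inj hyl).1 h)
      have h2 := hz y hyl (by omega) (by omega)
      exact (hG y x p h2 hxp (hc (h2.trans hxp)).symm).2.symm
  · push Not at hA
    have hpos : 0 < l.idxOf x := by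
      rw [Nat.pos_iff_ne_zero]
      intro h
      apply hxr
      rw [← hget x hx]
      simp only [h]
    obtain ⟨u, hu, hux⟩ := hreach _ (hlt x hx) hpos
    have hul := List.mem_of_mem_take hu
    rw [List.mem_take_iff_idxOf_lt hul] at hu
    rw [hget x hx] at hux
    obtain ⟨p, hp, hpmax⟩ := exists_max_image
      {z ∈ l.toFinset | l.idxOf z < l.idxOf x} id ⟨u, by simpa using ⟨hul, hu⟩⟩
    simp only [mem_filter, List.mem_toFinset, id] at hp hpmax
    have hpx : p < x := by
      refine lt_of_le_of_ne (hA p hp.1 hp.2) ?_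
      rintro rfl
      exact hp.2.false
    refine ⟨p, hp.1, hp.2, ?_, Or.inr ⟨hpx, fun z hz h => hpmax z ⟨hz, h⟩⟩⟩
    rcases (hpmax u ⟨hul, hu⟩).eq_or_lt with rfl | h
    · exact hux
    · exact (hG u p x h hpx hux).2

lemma IsNUIG.isDecTreeList (hG : IsNUIG G) {l : List (Fin n)} (hl : IsGoodWord G l) :
    IsDecTreeList G l := by
  obtain ⟨hnd, h0, hmin, -, -⟩ := isGoodWord_iff.1 hl
  have hex : ∀ x, ∃ p, x ∈ l → x ≠ l[0] → p ∈ l ∧ l.idxOf p < l.idxOf x ∧ G.Adj p x ∧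
      ((x < p ∧ ∀ z ∈ l, l.idxOf p < l.idxOf z → l.idxOf z < l.idxOf x → z < x) ∨
        (p < x ∧ ∀ z ∈ l, l.idxOf z < l.idxOf x → z ≤ p)) := by
    intro x
    by_cases hx : x ∈ l ∧ x ≠ l[0]
    · obtain ⟨p, hp⟩ := hG.exists_parent hl h0 hx.1 hx.2
      exact ⟨p, fun _ _ => hp⟩
    · exact ⟨x, fun h h' => absurd ⟨h, h'⟩ hx⟩
  choose par hpl hpos hadj htype using hex
  have hinj : ∀ x ∈ l, ∀ y, y ≠ x → l.idxOf y ≠ l.idxOf x := fun x hx y hyx h =>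
    hyx ((List.idxOf_inj hx).1 h.symm).symm
  let T : G.Subgraph :=
    { verts := {x | x ∈ l}
      Adj := fun x y => (y ∈ l ∧ y ≠ l[0] ∧ x = par y) ∨ (x ∈ l ∧ x ≠ l[0] ∧ y = par x)
      adj_sub := by
        rintro x y (⟨h1, h2, rfl⟩ | ⟨h1, h2, rfl⟩)
        · exact hadj y h1 h2
        · exact (hadj x h1 h2).symm
      edge_vert := by
        rintro x y (⟨h1, h2, rfl⟩ | ⟨h1, h2, rfl⟩)
        · exact hpl y h1 h2
        · exact h1
      symm := ⟨fun x y h => h.symm⟩ }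
  have hTadj : ∀ x y, T.Adj x y ↔
      (y ∈ l ∧ y ≠ l[0] ∧ x = par y) ∨ (x ∈ l ∧ x ≠ l[0] ∧ y = par x) := fun _ _ => Iff.rfl
  have hTverts : ∀ x, x ∈ T.verts ↔ x ∈ l := fun _ => Iff.rfl
  have h0l : l[0] ∈ l := List.getElem_mem h0
  refine ⟨T, ⟨⟨l[0], h0l⟩, isTree_coe_of_parent (r := l[0]) h0l l.idxOf par
    (fun v hv hvr => hpos v hv hvr) hTadj, ?_⟩, hnd, fun _ => Iff.rfl, fun _ v hv => hmin v hv, ?_⟩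
  · rintro v hv ⟨u, hu, hvu⟩
    rw [hTverts] at hv hu
    by_cases hA : ∃ z ∈ l, l.idxOf z < l.idxOf v ∧ v < z
    · obtain ⟨z, hz, hzv, hvz⟩ := hA
      have hvr : v ≠ l[0] := by
        intro h
        rw [h, hnd.idxOf_getElem] at hzv
        omega
      have hvp : v < par v := by
        rcases htype v hv hvr with h | h
        · exact h.1
        · exact hvz.trans_le (h.2 z hz hzv)
      refine ⟨par v, ⟨hvp, (hTadj _ _).2 (Or.inr ⟨hv, hvr, rfl⟩)⟩, ?_⟩
      rintro w ⟨hvw, hw⟩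
      rcases (hTadj _ _).1 hw with ⟨h1, h2, rfl⟩ | ⟨-, -, h⟩
      · rcases htype w h1 h2 with h | h
        · exact absurd h.1 hvw.not_gt
        · exact absurd (h.2 _ (hpl _ hv hvr) ((hpos _ hv hvr).trans (hpos w h1 h2))) hvp.not_ge
      · exact h
    · push Not at hA
      obtain ⟨w, hw, hwmin⟩ := exists_min_image {z ∈ l.toFinset | v < z} l.idxOf
        ⟨u, by simpa using ⟨hu, hvu⟩⟩
      simp only [mem_filter, List.mem_toFinset] at hw hwmin
      obtain ⟨hwl, hvw⟩ := hw
      have hvwpos : l.idxOf v < l.idxOf w := by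
        by_contra h
        have := hinj v hv w hvw.ne'
        exact hvw.not_ge (hA w hwl (by omega))
      have hroot : ∀ y, v < y → y ≠ l[0] := by
        rintro y hy rfl
        exact hy.not_ge (hmin v hv)
      have hwr := hroot w hvw
      have hle : ¬ v < par w := fun h =>
        (hpos w hwl hwr).not_ge (hwmin _ ⟨hpl w hwl hwr, h⟩)
      have hpw : v = par w := by
        rcases htype w hwl hwr with h | h
        · exact absurd (hvw.trans h.1) hle
        · exact le_antisymm (h.2 v hv hvwpos) (not_lt.1 hle)
      refine ⟨w, ⟨hvw, (hTadj _ _).2 (Or.inl ⟨hwl, hwr, hpw⟩)⟩, ?_⟩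
      rintro y ⟨hvy, hy⟩
      rcases (hTadj _ _).1 hy with ⟨h1, h2, h3⟩ | ⟨h1, h2, rfl⟩
      · by_contra hyw
        have h4 := hwmin y ⟨h1, hvy⟩
        have h5 := hinj w hwl y hyw
        rcases htype y h1 h2 with h | h
        · exact absurd (h3 ▸ h.1) hvy.not_gt
        · exact hvw.not_ge (h3 ▸ h.2 w hwl (by omega))
      · exact absurd (hA _ (hpl _ h1 h2) (hpos _ hv h2)) hvy.not_ge
  · intro t ht ht0
    have hal : l[t] ∈ l := List.getElem_mem ht
    have hai : l.idxOf l[t] = t := hnd.idxOf_getElem _ _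
    have har : l[t] ≠ l[0] := fun h => ht0.ne' (hnd.getElem_inj_iff.1 h)
    rw [List.get_eq_getElem]
    generalize l[t] = a at *
    refine ⟨⟨hal, ?_, par a, ?_, (hTadj _ _).2 (Or.inl ⟨hal, har, rfl⟩)⟩, ?_⟩
    · rw [List.mem_take_iff_idxOf_lt hal]
      omega
    · rw [List.mem_take_iff_idxOf_lt (hpl a hal har)]
      have := hpos a hal har
      omega
    · rintro b ⟨hbl, hbt, u, hu, hub⟩
      rw [hTverts] at hbl
      rw [List.mem_take_iff_idxOf_lt hbl] at hbt
      have hul := List.mem_of_mem_take hu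
      rw [List.mem_take_iff_idxOf_lt hul] at hu
      by_contra hab
      have hba := hinj a hal b (fun h => hab h.ge)
      rcases (hTadj _ _).1 hub with ⟨-, h2, rfl⟩ | ⟨-, h2, rfl⟩
      · rcases htype b hbl h2 with h | h
        · exact hab (h.2 a hal (by omega) (by omega)).le
        · exact hab ((h.2 a hal (by omega)).trans h.1.le)
      · have := hpos u hul h2
        omega

lemma IsNUIG.isDecTreeList_iff (hG : IsNUIG G) {l : List (Fin n)} :
    IsDecTreeList G l ↔ IsGoodWord G l :=
  ⟨IsDecTreeList.isGoodWord, hG.isDecTreeList⟩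

end DecreasingTrees

section MainTheorem

open Finset Polynomial
open scoped Classical

variable {n : ℕ} {G : SimpleGraph (Fin n)}

lemma sG_eq_indS_univ : sG G = indS G univ := by
  have h : univ.filter (fun i : Fin n => (i : ℕ) ≠ 0) =
      univ.filter fun i : Fin n => ∃ j ∈ (univ : Finset (Fin n)), j < i := by
    ext i
    simp only [mem_filter, mem_univ, true_and]
    constructor
    · intro h
      exact ⟨⟨0, by omega⟩, Fin.lt_def.2 (Nat.pos_of_ne_zero h)⟩
    · rintro ⟨j, hj⟩
      exact (Nat.zero_le _).trans_lt (Fin.lt_def.1 hj) |>.ne'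
  rw [sG, indS, h]
  refine prod_congr rfl fun i _ => ?_
  rw [bG, degIn, ← card_filter, filter_filter, Nat.card_eq_fintype_card, Fintype.card_subtype]

/-- The pairs of decreasing trees are the pairs of good words on complementary sets. -/
lemma IsNUIG.skG_eq (hG : IsNUIG G) (hn : 0 < n) {k : ℕ} (hk : k ≠ 0) (hkn : k < n) :
    skG G hn k = (SetAlg.dec G k * SetAlg.marked ⟨0, hn⟩ (SetAlg.dec G (n - k))) univ := by
  have hL : skG G hn k = ∑ l ∈ wordsOn (univ : Finset (Fin n)) with
      IsGoodWord G (l.take (n - k)) ∧ IsGoodWord G (l.drop (n - k)) ∧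
        (⟨0, hn⟩ : Fin n) ∈ l.take (n - k), X ^ invL G l := by
    simp only [skG, invG_eq_invL, hG.isDecTreeList_iff]
    refine finsum_cond_eq_sum_of_cond_iff _ fun {l} _ => ?_
    rw [mem_filter, mem_wordsOn, and_assoc]
  have hterm : ∀ B ∈ (univ : Finset (Fin n)).powerset,
      X ^ ascBetween G B (univ \ B) * SetAlg.dec G k B *
        SetAlg.marked ⟨0, hn⟩ (SetAlg.dec G (n - k)) (univ \ B) =
      if #B = k ∧ ⟨0, hn⟩ ∈ univ \ B then
        ∑ p ∈ goodWords G (univ \ B) ×ˢ goodWords G B, X ^ invL G (p.1 ++ p.2) else 0 := by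
    intro B _
    rw [SetAlg.marked_apply, SetAlg.dec_apply, SetAlg.dec_apply]
    by_cases h1 : #B = k
    · have hc : #(univ \ B) = n - k := by
        rw [card_sdiff_of_subset (subset_univ B), h1, card_fin]
      by_cases h2 : (⟨0, hn⟩ : Fin n) ∈ univ \ B
      · rw [if_pos h1, if_pos h2, if_pos hc, if_pos ⟨h1, h2⟩,
          hG.indS_eq_sum_goodWords (card_pos.1 (by omega)),
          hG.indS_eq_sum_goodWords (card_pos.1 (by omega)), sum_product, mul_sum]
        refine sum_congr rfl fun l₁ hl₁ => ?_
        rw [mul_sum, sum_mul]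
        refine sum_congr rfl fun l₂ hl₂ => ?_
        rw [mem_goodWords] at hl₁ hl₂
        rw [invL_append_of_nodup hl₁.1.nodup hl₂.1.nodup, hl₁.2, hl₂.2]
        ring
      · rw [if_neg h2, if_neg (not_and_of_not_right _ h2), mul_zero]
    · rw [if_neg h1, if_neg (not_and_of_not_left _ h1), mul_zero, zero_mul]
  rw [hL, SetAlg.mul_apply, sum_congr rfl hterm, ← sum_filter, sum_sigma']
  refine sum_bij' (fun l _ => ⟨(l.drop (n - k)).toFinset, l.take (n - k), l.drop (n - k)⟩)
    (fun p _ => p.2.1 ++ p.2.2) ?_ ?_ ?_ ?_ ?_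
  · intro l hl
    simp only [mem_filter, mem_wordsOn] at hl
    obtain ⟨⟨hnd, hu⟩, h1, h2, h0⟩ := hl
    have hlen : l.length = n := by rw [← List.toFinset_card_of_nodup hnd, hu, card_fin]
    have hc : univ \ (l.drop (n - k)).toFinset = (l.take (n - k)).toFinset := by
      rw [← List.take_append_drop (n - k) l] at hnd
      rw [← hu]
      nth_rw 1 [← List.take_append_drop (n - k) l]
      rw [List.toFinset_append, union_sdiff_right, Finset.sdiff_eq_self_iff_disjoint,
        List.disjoint_toFinset_iff_disjoint]
      exact List.disjoint_of_nodup_append hnd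
    simp only [mem_sigma, mem_filter, mem_powerset, subset_univ, true_and, mem_product,
      mem_goodWords, hc, List.mem_toFinset, h0, h1, h2, and_true]
    rw [List.toFinset_card_of_nodup h2.nodup, List.length_drop, hlen]
    omega
  · rintro ⟨B, l₁, l₂⟩ hp
    simp only [mem_sigma, mem_filter, mem_product, mem_goodWords] at hp
    obtain ⟨⟨-, hB, h0⟩, ⟨h1, hl₁⟩, h2, rfl⟩ := hp
    have hlen : l₁.length = n - k := by
      rw [← List.toFinset_card_of_nodup h1.nodup, hl₁, card_sdiff_of_subset (subset_univ _), hB,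
        card_fin]
    simp only [mem_filter, mem_wordsOn, List.take_left' hlen, List.drop_left' hlen]
    refine ⟨⟨h1.nodup.append h2.nodup ?_, ?_⟩, h1, h2, List.mem_toFinset.1 (hl₁ ▸ h0)⟩
    · rw [← List.disjoint_toFinset_iff_disjoint, hl₁]
      exact sdiff_disjoint
    · rw [List.toFinset_append, hl₁]
      exact sdiff_union_of_subset (subset_univ _)
  · intro l _
    exact List.take_append_drop _ _
  · rintro ⟨B, l₁, l₂⟩ hp
    simp only [mem_sigma, mem_filter, mem_product, mem_goodWords] at hp
    obtain ⟨⟨-, hB, h0⟩, ⟨h1, hl₁⟩, h2, rfl⟩ := hp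
    have hlen : l₁.length = n - k := by
      rw [← List.toFinset_card_of_nodup h1.nodup, hl₁, card_sdiff_of_subset (subset_univ _), hB,
        card_fin]
    simp only [List.take_left' hlen, List.drop_left' hlen]
  · intro l _
    rw [List.take_append_drop]

lemma IsNUIG.dec_mul_dec_univ (hG : IsNUIG G) (hn : 0 < n) {k : ℕ} (hk : k ≠ 0) (hkn : k < n) :
    (SetAlg.dec G (n - k) * SetAlg.dec G k) univ =
      skG G hn k + skG G hn (n - k) + (X - 1) * sG G := by
  have hmark := congrFun (SetAlg.marked_mul ⟨0, hn⟩ (SetAlg.dec G (n - k)) (SetAlg.dec G k)) univ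
  have hcomm := congrFun (SetAlg.marked_dec_commutator hG (v := ⟨0, hn⟩)
    (fun w => Fin.le_def.2 (Nat.zero_le _)) (n - k - 1) hk) univ
  rw [show n - k - 1 + 1 = n - k by omega, show n - k + k = n by omega] at hcomm
  rw [SetAlg.marked_apply, if_pos (mem_univ _), SetAlg.add_apply] at hmark
  rw [SetAlg.sub_apply, SetAlg.smul_apply, SetAlg.marked_apply, if_pos (mem_univ _),
    SetAlg.dec_apply, if_pos (card_fin n), ← sG_eq_indS_univ] at hcomm
  rw [hmark, hG.skG_eq hn hk hkn, hG.skG_eq hn (k := n - k) (by omega) (by omega),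
    show n - (n - k) = k by omega]
  linear_combination hcomm

end MainTheorem

/-- if `X_G(x;q) = Σ_μ c_μ(q) e_μ` for a natural unit interval graph `G`,
then for `1 ≤ k < n/2` the coefficient of `e_{(n-k,k)}` is
`[n-k]_q([k]_q s_k(G) - s(G)) + [k]_q([n-k]_q s_{n-k}(G) - s(G))`. -/
theorem coeff_esymm_two_part {n : ℕ} (G : SimpleGraph (Fin n)) (hG : IsNUIG G)
    (k : ℕ) (hk1 : 1 ≤ k) (hk2 : 2 * k < n)
    (c : Nat.Partition n → Polynomial ℤ)
    (hc : ∀ N : ℕ, cqf G N = ∑ μ : Nat.Partition n,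
      MvPolynomial.C (c μ) * MvPolynomial.esymmPart (Fin N) (Polynomial ℤ) μ) :
    c ⟨{n - k, k}, by
        intro i hi
        simp only [Multiset.mem_cons, Multiset.mem_singleton, Multiset.insert_eq_cons] at hi
        rcases hi with h | h <;> omega, by
        simp only [Multiset.insert_eq_cons, Multiset.sum_cons, Multiset.sum_singleton]
        omega⟩ =
      qint (n - k) * (qint k * skG G (by omega) k - sG G) +
        qint k * (qint (n - k) * skG G (by omega) (n - k) - sG G) := by
  have hn : 0 < n := by omega
  rw [SetAlg.coeff_eq_of_parts hG hc (a := n - k) (b := k) hk1 (by omega) (by omega) rfl,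
    hG.dec_mul_dec_univ hn (by omega) (by omega), ← sG_eq_indS_univ]
  have h1 := qint_add (n - k) k
  rw [Nat.sub_add_cancel (by omega)] at h1
  linear_combination (-sG G) * h1 + qint k * sG G * X_sub_one_mul_qint (n - k)
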